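/- arXiv:1302.0556 — 2 statements merged into one kernel-verified Lean document; each statement's English description precedes it below -/
import Mathlib

section
/- Let $M$ be a compact smooth manifold with a symplectic form $\omega$, and let a group $G$ act on $M$ by diffeomorphisms (for instance a compact connected Lie group acting in a hamiltonian way). Let $\mathcal{J}^G$ be the space of $G$-invariant almost complex structures on $M$ compatible with $\omega$. A map $F$ from an open subset $U$ of a complex normed vector space to $\mathcal{J}^G$ is called holomorphic if it is smooth (that is, $(p,x)\mapsto F(x)_p$ is smooth on $M\times U$) and $dF_x(i h)=F(x)\circ dF_x(h)$ for all $x\in U$ and all $h$. For an almost complex structure $J$ let $$N_J(X,Y)=\tfrac14\left([JX,JY]-J[JX,Y]-J[X,JY]-[X,Y]\right)$$ be its Nijenhuis tensor, let $(\mathcal{L}_XJ)Y=[X,JY]-J[X,Y]$, and call $J$ integrable if $N_J=0$. For a disk $\Delta\subseteq\mathbb{C}$ and a map $F:\Delta\to\mathcal{J}^G$, let $J$ be the field of endomorphisms of the tangent spaces of $M\times\Delta$ given by the standard complex structure on the $\Delta$-directions and by $J_z=F(z)$ on the fibre $M\times\{z\}$. (1) Let $\Delta$ be an open disk with centre $c$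 and let $F:\Delta\to\mathcal{J}^G$ be a holomorphic map such that $F(z)$ is integrable for every $z\in\Delta\setminus\{c\}$. Then $J$ is a smooth almost complex structure on $M\times\Delta$ and is integrable, i.e. $N_J=0$. In particular, for $X$ tangent to $\Delta$ and $Y$ tangent to $M$, $$N_J(X,Y)=\tfrac14\left((\mathcal{L}_{JX}J)Y-J(\mathcal{L}_XJ)Y\right)=0 .$$ (2) Let a group $K^{\mathbb{C}}$ act complex linearly on a finite-dimensional complex normed space $H$, let $B\subseteq H$ be an open ball centred at $0$, and let $\Phi_1:B\to\mathcal{J}^G$ be holomorphic and $K^{\mathbb{C}}$-equivariant in the following sense: if $y,y'\in B$ lie in the same $K^{\mathbb{C}}$-orbit and $\Phi_1(y)$ is integrable, then $\Phi_1(y')$ lies on the complexified orbit of $\Phi_1(y)$, i.e. there are a $G$-equivariant diffeomorphism $f$ of $M$ and a smooth $G$-invariant function $\psi:M\to\mathbb{R}$ such that $f$ pulls back the pair $(\omega,\Phi_1(y'))$ to $(\omega+i\partial\bar\partial\psi,\Phi_1(y))$. Let $x\in B$ be such that $\Phi_1(x)$ is integrable, and let $\rho:\mathbb{C}^*\to K^{\mathbb{C}}$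 be a one-parameter subgroup such that $z\mapsto\rho(z)\cdot x$ is holomorphic on $\mathbb{C}^*$ and has a limit $x_0$ as $z\to0$; put $\rho(0)\cdot x:=x_0$. Let $\Delta$ be an open disk of radius $\delta>0$ centred at $0$ with $\rho(z)\cdot x\in B$ for all $z\in\Delta$. Then $F:\Delta\to\mathcal{J}^G$, $F(z)=\Phi_1(\rho(z)\cdot x)$, is holomorphic, and all the conclusions of (1) hold for $F$. -/
open Set Filter Topology Bundle VectorField TopologicalSpace
open scoped Manifold ContDiff

namespace ProductACS

noncomputable section

section General

variable {V : Type*} [NormedAddCommGroup V] [NormedSpace ℝ V]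
  {A : Type*} [TopologicalSpace A] (I : ModelWithCorners ℝ V A)
  {N : Type*} [TopologicalSpace N] [ChartedSpace A N] [IsManifold I ∞ N]

/-- `X` is smooth near `p`, as a section of the tangent bundle. -/
def SmoothFieldAt (X : (p : N) → TangentSpace I p) (p : N) : Prop :=
  ContMDiffAt I I.tangent ∞ (fun q => (⟨q, X q⟩ : TangentBundle I N)) p

/-- Fields of (continuous, real-linear) endomorphisms of the tangent spaces. -/
abbrev EndField (N : Type*) [TopologicalSpace N] [ChartedSpace A N] : Type _ :=
  (p : N) → (TangentSpace I p →L[ℝ] TangentSpace I p)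

/-- Almost complex structures: smooth sections `J` of `End(TN)` with `J² = -1`. -/
structure IsAlmostComplex (J : EndField I N) : Prop where
  smooth : ContMDiff I (I.prod 𝓘(ℝ, V →L[ℝ] V)) ∞
    (fun p => TotalSpace.mk' (V →L[ℝ] V)
      (E := fun p : N => TangentSpace I p →L[ℝ] TangentSpace I p) p (J p))
  sq : ∀ (p : N) (v : TangentSpace I p), J p (J p v) = -v

/-- The field `J X`. -/
def applyField (J : EndField I N) (X : (p : N) → TangentSpace I p) :
    (p : N) → TangentSpace I p :=
  fun p => J p (X p)

/-- The Lie derivative of an endomorphism field: `(ℒ_X J) Y = [X, J Y] - J [X, Y]`. -/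
def lieDerivEnd (J : EndField I N) (X Y : (p : N) → TangentSpace I p) (p : N) :
    TangentSpace I p :=
  mlieBracket I X (applyField I J Y) p - J p (mlieBracket I X Y p)

/-- The Nijenhuis tensor
`N_J(X, Y) = (1/4) ([JX, JY] - J [JX, Y] - J [X, JY] - [X, Y])`. -/
def nijenhuis (J : EndField I N) (X Y : (p : N) → TangentSpace I p) (p : N) :
    TangentSpace I p :=
  (1 / 4 : ℝ) • (mlieBracket I (applyField I J X) (applyField I J Y) p
    - J p (mlieBracket I (applyField I J X) Y p)
    - J p (mlieBracket I X (applyField I J Y) p)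
    - mlieBracket I X Y p)

/-- An almost complex structure is integrable when its Nijenhuis tensor vanishes. -/
structure IsIntegrable (J : EndField I N) : Prop where
  isAlmostComplex : IsAlmostComplex I J
  nijenhuis_eq_zero : ∀ (p : N) (X Y : (p : N) → TangentSpace I p),
    SmoothFieldAt I X p → SmoothFieldAt I Y p → nijenhuis I J X Y p = 0

/-- The derivative `X f` of a function along a vector field. -/
def dirDeriv (X : (p : N) → TangentSpace I p) (f : N → ℝ) (p : N) : ℝ :=
  (mfderiv I 𝓘(ℝ, ℝ) f p : V →L[ℝ] ℝ) (X p)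

/-- Fields of bilinear forms on the tangent spaces. -/
abbrev FormField (N : Type*) [TopologicalSpace N] [ChartedSpace A N] : Type _ :=
  (p : N) → (TangentSpace I p →L[ℝ] TangentSpace I p →L[ℝ] ℝ)

/-- Symplectic forms: smooth, alternating, non-degenerate, closed 2-forms. -/
structure IsSymplectic (σ : FormField I N) : Prop where
  smooth : ContMDiff I (I.prod 𝓘(ℝ, V →L[ℝ] V →L[ℝ] ℝ)) ∞
    (fun p => TotalSpace.mk' (V →L[ℝ] V →L[ℝ] ℝ)
      (E := fun p : N => TangentSpace I p →L[ℝ] TangentSpace I p →L[ℝ] ℝ) p (σ p))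
  alternating : ∀ (p : N) (v : TangentSpace I p), σ p v v = 0
  nondegenerate : ∀ (p : N) (v : TangentSpace I p), (∀ w, σ p v w = 0) → v = 0
  closed : ∀ (p : N) (X Y Z : (p : N) → TangentSpace I p),
    SmoothFieldAt I X p → SmoothFieldAt I Y p → SmoothFieldAt I Z p →
    dirDeriv I X (fun q => σ q (Y q) (Z q)) p
      - dirDeriv I Y (fun q => σ q (X q) (Z q)) p
      + dirDeriv I Z (fun q => σ q (X q) (Y q)) p
      - σ p (mlieBracket I X Y p) (Z p)
      + σ p (mlieBracket I X Z p) (Y p)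
      - σ p (mlieBracket I Y Z p) (X p) = 0

/-- The space `𝒥^G` of `G`-invariant almost complex structures compatible with `σ`. -/
structure IsInvariantCompatible (σ : FormField I N) (G : Type*) [Group G] [MulAction G N]
    (J : EndField I N) : Prop where
  isAlmostComplex : IsAlmostComplex I J
  preserves : ∀ (p : N) (v w : TangentSpace I p), σ p (J p v) (J p w) = σ p v w
  positive : ∀ (p : N) (v : TangentSpace I p), v ≠ 0 → 0 < σ p v (J p v)
  invariant : ∀ (g : G) (p : N) (v : TangentSpace I p),
    mfderiv I I (fun q : N => g • q) p (J p v)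
      = J (g • p) (mfderiv I I (fun q : N => g • q) p v)

/-- The 2-form `i ∂ ∂bar ψ = -(1/2) d(dψ ∘ J)`, where
`dθ(X, Y) = X (θ Y) - Y (θ X) - θ [X, Y]`. -/
def iddbar (J : EndField I N) (ψ : N → ℝ) (X Y : (p : N) → TangentSpace I p) (p : N) : ℝ :=
  -(1 / 2 : ℝ) * (dirDeriv I X (fun q => dirDeriv I (applyField I J Y) ψ q) p
    - dirDeriv I Y (fun q => dirDeriv I (applyField I J X) ψ q) p
    - dirDeriv I (applyField I J (mlieBracket I X Y)) ψ p)

/-- `J'` lies on the complexified orbit of `J` (for `J` integrable, under the group of hamiltonian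
diffeomorphisms commuting with `G`): a `G`-equivariant diffeomorphism `f` pulls the pair `(σ, J')`
back to `(σ + i ∂ ∂bar ψ, J)`, for some smooth `G`-invariant function `ψ`. -/
def OnComplexifiedOrbit (σ : FormField I N) (G : Type*) [Group G] [MulAction G N]
    (J J' : EndField I N) : Prop :=
  ∃ (f : N ≃ₘ^∞⟮I, I⟯ N) (ψ : N → ℝ),
    (∀ (g : G) (p : N), f (g • p) = g • f p) ∧
    ContMDiff I 𝓘(ℝ, ℝ) ∞ ψ ∧ (∀ (g : G) (p : N), ψ (g • p) = ψ p) ∧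
    (∀ (p : N) (v : TangentSpace I p),
      mfderiv I I f p (J p v) = J' (f p) (mfderiv I I f p v)) ∧
    (∀ (p : N) (X Y : (p : N) → TangentSpace I p), SmoothFieldAt I X p → SmoothFieldAt I Y p →
      σ (f p) (mfderiv I I f p (X p)) (mfderiv I I f p (Y p))
        = σ p (X p) (Y p) + iddbar I J ψ X Y p)

/-- Holomorphy on `U` of a map `F` from a complex normed space `W` to `𝒥^G`.
The map is smooth, that is, `(p, x) ↦ F(x)_p` is smooth on `N × U`, and its differential is complex
linear: on `T_J 𝒥^G`, identified with endomorphism fields `α` anticommuting with `J`, multiplication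
by `i` on the values in `T^{1,0}` is `α ↦ J ∘ α`, so that the condition is
`dF_x(i h) = F(x) ∘ dF_x(h)`. -/
structure IsHolomorphicOn {W : Type*} [NormedAddCommGroup W] [NormedSpace ℂ W]
    (F : W → EndField I N) (U : Set W) : Prop where
  smooth : ContMDiffOn (I.prod 𝓘(ℝ, W)) (I.prod 𝓘(ℝ, V →L[ℝ] V)) ∞
    (fun q : N × W => TotalSpace.mk' (V →L[ℝ] V)
      (E := fun p : N => TangentSpace I p →L[ℝ] TangentSpace I p) q.1 (F q.2 q.1))
    (univ ×ˢ U)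
  complexLinear : ∀ x ∈ U, ∀ (p : N) (h : W),
    fderiv ℝ (fun y => (F y p : V →L[ℝ] V)) x (Complex.I • h)
      = (F x p : V →L[ℝ] V) ∘L fderiv ℝ (fun y => (F y p : V →L[ℝ] V)) x h

end General

section Product

variable {V : Type*} [NormedAddCommGroup V] [NormedSpace ℝ V]
  {M : Type*} [TopologicalSpace M] [ChartedSpace V M]

/-- The open disk of radius `δ` about `c`, as an open submanifold of `ℂ`. -/
def disk (c : ℂ) (δ : ℝ) : Opens ℂ := ⟨Metric.ball c δ, Metric.isOpen_ball⟩

/-- The model of `M × Δ`, a manifold with tangent spaces `T_pM × ℂ`. -/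
abbrev prodModel (V : Type*) [NormedAddCommGroup V] [NormedSpace ℝ V] :
    ModelWithCorners ℝ (V × ℂ) (ModelProd V ℂ) :=
  𝓘(ℝ, V).prod 𝓘(ℝ, ℂ)

/-- The endomorphism field `(v, w) ↦ (F(z)_p v, i w)` on `M × Δ`, at `(p, z)`. -/
def productStructure (F : ℂ → EndField 𝓘(ℝ, V) M) (Δ : Opens ℂ) :
    EndField (prodModel V) (M × Δ) :=
  fun q => ((F (q.2 : ℂ) q.1 : V →L[ℝ] V).prodMap
    (Complex.I • ContinuousLinearMap.id ℝ ℂ : ℂ →L[ℝ] ℂ) : V × ℂ →L[ℝ] V × ℂ)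

/-- `X` is tangent to the factor `Δ`. -/
def TangentToBase {Δ : Opens ℂ} (X : (q : M × Δ) → TangentSpace (prodModel V) q) : Prop :=
  ∀ q, (X q : V × ℂ).1 = 0

/-- `Y` is tangent to the factor `M`. -/
def TangentToFibre {Δ : Opens ℂ} (Y : (q : M × Δ) → TangentSpace (prodModel V) q) : Prop :=
  ∀ q, (Y q : V × ℂ).2 = 0

/-- The product structure `J` is an integrable almost complex structure on `M × Δ`, and
`N_J(X, Y) = (1/4) ((ℒ_{JX} J) Y - J (ℒ_X J) Y) = 0` for `X` tangent to `Δ`, `Y` tangent to `M`. -/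
def ProductIsIntegrable [IsManifold 𝓘(ℝ, V) ∞ M] (F : ℂ → EndField 𝓘(ℝ, V) M)
    (Δ : Opens ℂ) : Prop :=
  IsIntegrable (prodModel V) (productStructure F Δ) ∧
  ∀ (q : M × Δ) (X Y : (q : M × Δ) → TangentSpace (prodModel V) q),
    SmoothFieldAt (prodModel V) X q → SmoothFieldAt (prodModel V) Y q →
    TangentToBase X → TangentToFibre Y →
    nijenhuis (prodModel V) (productStructure F Δ) X Y q
        = (1 / 4 : ℝ) • (lieDerivEnd (prodModel V) (productStructure F Δ)
              (applyField (prodModel V) (productStructure F Δ) X) Y q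
            - productStructure F Δ q
              (lieDerivEnd (prodModel V) (productStructure F Δ) X Y q)) ∧
      (1 / 4 : ℝ) • (lieDerivEnd (prodModel V) (productStructure F Δ)
              (applyField (prodModel V) (productStructure F Δ) X) Y q
            - productStructure F Δ q
              (lieDerivEnd (prodModel V) (productStructure F Δ) X Y q)) = 0

end Product

end

end ProductACS

open ProductACS

/-!
The Nijenhuis tensor is natural under local diffeomorphisms, so it can be computed in a chart,
where at each point it is an expression in the value `J` and the derivative `dJ` of the structure.
Integrability is therefore a closed condition in a smooth family of structures, and it passes from
a dense set of parameters to all of them.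

In a product chart the structure on `M × Δ` is `F(z) ⊕ i`. Its derivative has values in
endomorphisms of `TM`, so `N_J` has no component along `Δ`. The part of `N_J` along the fibre is the
Nijenhuis tensor of `F(z)`, and the mixed part vanishes since it is, up to sign, the value of
`dF(i h) - F(z) ∘ dF(h)` on a vector tangent to `M`.

For an orbit, `z ↦ ρ(z) · x` extends holomorphically across `0` by the removable singularity
theorem, and its values off `0` lie in a single group orbit, along which integrability is
transported by diffeomorphisms.
-/

namespace ProductACS

noncomputable section

section Pullback

variable {V V' : Type*} [NormedAddCommGroup V] [NormedSpace ℝ V]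
  [NormedAddCommGroup V'] [NormedSpace ℝ V']
  {A A' : Type*} [TopologicalSpace A] [TopologicalSpace A']
  (I : ModelWithCorners ℝ V A) (I' : ModelWithCorners ℝ V' A')
  {N N' : Type*} [TopologicalSpace N] [ChartedSpace A N]
  [TopologicalSpace N'] [ChartedSpace A' N']

/-- The pullback `(df)⁻¹ ∘ J ∘ df` of an endomorphism field along a map `f`. Where `df` is not
invertible, its inverse, and hence the pullback, is `0` by convention, in accordance with
`VectorField.mpullback`. -/
def pullbackEnd (f : N' → N) (J : EndField I N) : EndField I' N' :=
  fun p => (mfderiv I' I f p).inverse ∘L J (f p) ∘L mfderiv I' I f p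

variable {I I'}

theorem inverse_mfderiv_apply_end (f : N' → N) (J : EndField I N) (p : N')
    (v : TangentSpace I (f p)) :
    (mfderiv I' I f p).inverse (J (f p) v)
      = pullbackEnd I I' f J p ((mfderiv I' I f p).inverse v) := by
  by_cases h : (mfderiv I' I f p).IsInvertible
  · simp only [pullbackEnd, ContinuousLinearMap.comp_apply, h.self_apply_inverse]
  · simp only [pullbackEnd, ContinuousLinearMap.comp_apply,
      ContinuousLinearMap.inverse_of_not_isInvertible h, zero_apply]

theorem mpullback_applyField (f : N' → N) (J : EndField I N)
    (X : (p : N) → TangentSpace I p) :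
    mpullback I' I f (applyField I J X)
      = applyField I' (pullbackEnd I I' f J) (mpullback I' I f X) :=
  funext fun p => inverse_mfderiv_apply_end f J p (X (f p))

theorem pullbackEnd_apply_of_comp_eq {f : N' → N} {J : EndField I N} {p : N'}
    (hf : (mfderiv I' I f p).IsInvertible) {L : TangentSpace I' p →L[ℝ] TangentSpace I' p}
    (hL : mfderiv I' I f p ∘L L = J (f p) ∘L mfderiv I' I f p) :
    pullbackEnd I I' f J p = L := by
  rw [pullbackEnd, ← hL]
  ext v
  simp only [ContinuousLinearMap.comp_apply, hf.inverse_apply_self]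

variable [IsManifold I ∞ N] [IsManifold I' ∞ N']

theorem SmoothFieldAt.applyField {J : EndField I N} (hJ : IsAlmostComplex I J)
    {X : (p : N) → TangentSpace I p} {p : N} (hX : SmoothFieldAt I X p) :
    SmoothFieldAt I (applyField I J X) p :=
  ContMDiffAt.clm_bundle_apply (hJ.smooth p) hX

theorem inverse_mfderiv_mlieBracket [CompleteSpace V'] {f : N' → N} {p : N'}
    (hf : ContMDiffAt I' I ∞ f p) {X Y : (p : N) → TangentSpace I p}
    (hX : SmoothFieldAt I X (f p)) (hY : SmoothFieldAt I Y (f p)) :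
    (mfderiv I' I f p).inverse (mlieBracket I X Y (f p))
      = mlieBracket I' (mpullback I' I f X) (mpullback I' I f Y) p := by
  have two_le : minSmoothness ℝ 2 ≤ (∞ : ℕ∞ω) := by
    rw [minSmoothness_of_isRCLikeNormedField]
    exact WithTop.coe_le_coe.2 (le_top : (2 : ℕ∞) ≤ ⊤)
  have : IsManifold I (minSmoothness ℝ 2) N := IsManifold.of_le (n := ∞) two_le
  have : IsManifold I' (minSmoothness ℝ 2) N' := IsManifold.of_le (n := ∞) two_le
  exact mpullback_mlieBracket (hX.mdifferentiableAt (by simp)) (hY.mdifferentiableAt (by simp))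
    hf two_le

theorem mpullback_nijenhuis_apply [CompleteSpace V'] {f : N' → N} {p : N'}
    (hf : ContMDiffAt I' I ∞ f p) {J : EndField I N} (hJ : IsAlmostComplex I J)
    {X Y : (p : N) → TangentSpace I p}
    (hX : SmoothFieldAt I X (f p)) (hY : SmoothFieldAt I Y (f p)) :
    mpullback I' I f (nijenhuis I J X Y) p
      = nijenhuis I' (pullbackEnd I I' f J) (mpullback I' I f X) (mpullback I' I f Y) p := by
  have hJX := hX.applyField hJ
  have hJY := hY.applyField hJ
  simp only [mpullback_apply, nijenhuis, map_smul, map_sub, inverse_mfderiv_apply_end,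
    ← mpullback_applyField, inverse_mfderiv_mlieBracket hf hJX hJY,
    inverse_mfderiv_mlieBracket hf hJX hY, inverse_mfderiv_mlieBracket hf hX hJY,
    inverse_mfderiv_mlieBracket hf hX hY]

theorem IsIntegrable.of_diffeomorph [CompleteSpace V'] {J : EndField I N} {J' : EndField I' N'}
    (hJ' : IsIntegrable I' J') (hJ : IsAlmostComplex I J) (f : N' ≃ₘ^∞⟮I', I⟯ N)
    (hf : pullbackEnd I I' f J = J') : IsIntegrable I J where
  isAlmostComplex := hJ
  nijenhuis_eq_zero q X Y hX hY := by
    obtain ⟨p, rfl⟩ : ∃ p, f p = q := f.surjective q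
    have inv : (mfderiv I' I f p).IsInvertible :=
      ⟨f.mfderivToContinuousLinearEquiv (by simp) p, rfl⟩
    have smooth_pullback {Z : (q : N) → TangentSpace I q} (hZ : SmoothFieldAt I Z (f p)) :
        SmoothFieldAt I' (mpullback I' I f Z) p :=
      ContMDiffAt.mpullback_vectorField_preimage hZ (f.contMDiff p) inv (by simp)
    have h : (mfderiv I' I f p).inverse (nijenhuis I J X Y (f p)) = 0 := by
      rw [← mpullback_apply, mpullback_nijenhuis_apply (f.contMDiff p) hJ hX hY, hf]
      exact hJ'.nijenhuis_eq_zero p _ _ (smooth_pullback hX) (smooth_pullback hY)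
    rw [← inv.self_apply_inverse (nijenhuis I J X Y (f p)), h, map_zero]

theorem OnComplexifiedOrbit.isIntegrable [CompleteSpace V] {σ : FormField I N} {G : Type*}
    [Group G] [MulAction G N] {J J' : EndField I N} (h : OnComplexifiedOrbit I σ G J J')
    (hJ : IsIntegrable I J) (hJ' : IsAlmostComplex I J') : IsIntegrable I J' := by
  obtain ⟨f, -, -, -, -, hf, -⟩ := h
  refine hJ.of_diffeomorph hJ' f (funext fun p => ?_)
  exact pullbackEnd_apply_of_comp_eq ⟨f.mfderivToContinuousLinearEquiv (by simp) p, rfl⟩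
    (ContinuousLinearMap.ext (hf p))

end Pullback

section Chart

variable {V : Type*} [NormedAddCommGroup V] [NormedSpace ℝ V]

/-- Four times the Nijenhuis tensor, on the vectors `x` and `y`, of an almost complex structure on
a vector space with value `j` and derivative `d` at the given point. -/
def nijForm (j : V →L[ℝ] V) (d : V →L[ℝ] V →L[ℝ] V) (x y : V) : V :=
  d (j x) y - d (j y) x + j (d y x) - j (d x y)

theorem lieBracket_nijenhuis_eq_nijForm {J : V → V →L[ℝ] V} {X Y : V → V} {u : V}
    (hJ : DifferentiableAt ℝ J u) (hX : DifferentiableAt ℝ X u) (hY : DifferentiableAt ℝ Y u)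
    (hsq : ∀ v, J u (J u v) = -v) :
    lieBracket ℝ (fun v => J v (X v)) (fun v => J v (Y v)) u
      - J u (lieBracket ℝ (fun v => J v (X v)) Y u)
      - J u (lieBracket ℝ X (fun v => J v (Y v)) u)
      - lieBracket ℝ X Y u = nijForm (J u) (fderiv ℝ J u) (X u) (Y u) := by
  simp only [lieBracket, nijForm, fderiv_clm_apply hJ hX, fderiv_clm_apply hJ hY, add_apply,
    ContinuousLinearMap.comp_apply, ContinuousLinearMap.flip_apply, map_sub, map_add, hsq]
  abel

theorem mlieBracket_eq_lieBracket (X Y : (v : V) → TangentSpace 𝓘(ℝ, V) v) :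
    mlieBracket 𝓘(ℝ, V) X Y = lieBracket (E := V) ℝ X Y := by
  rw [← mlieBracketWithin_univ, mlieBracketWithin_eq_lieBracketWithin]
  exact lieBracketWithin_univ (E := V)

theorem nijenhuis_eq_nijForm {J : V → V →L[ℝ] V} {X Y : (v : V) → TangentSpace 𝓘(ℝ, V) v} {u : V}
    (hJ : DifferentiableAt ℝ J u) (hX : DifferentiableAt (E := V) (F := V) ℝ X u)
    (hY : DifferentiableAt (E := V) (F := V) ℝ Y u) (hsq : ∀ v, J u (J u v) = -v) :
    nijenhuis 𝓘(ℝ, V) J X Y u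
      = (1 / 4 : ℝ) • nijForm (V := V) (J u) (fderiv ℝ J u) (X u) (Y u) := by
  simp only [nijenhuis, mlieBracket_eq_lieBracket]
  exact congrArg (fun v : V => (1 / 4 : ℝ) • v) (lieBracket_nijenhuis_eq_nijForm hJ hX hY hsq)

variable {A : Type*} [TopologicalSpace A] {I : ModelWithCorners ℝ V A}
  {N : Type*} [TopologicalSpace N] [ChartedSpace A N]

/-- The endomorphism field `J`, read in the chart at `x₀`. -/
def chartEnd (I : ModelWithCorners ℝ V A) (x₀ : N) (J : EndField I N) : V → V →L[ℝ] V :=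
  pullbackEnd I 𝓘(ℝ, V) (extChartAt I x₀).symm J

/-- A family `F` of endomorphism fields, read in the chart at `x₀`, as a function of the chart
coordinates and the parameter. -/
def chartFamily {W : Type*} (F : W → EndField I N) (x₀ : N) : V × W → V →L[ℝ] V :=
  fun t => chartEnd I x₀ (F t.2) t.1

variable [IsManifold I ∞ N]

theorem exists_smoothFieldAt (x₀ : N) (v : TangentSpace I x₀) :
    ∃ X : (p : N) → TangentSpace I p, SmoothFieldAt I X x₀ ∧ X x₀ = v :=
  ⟨FiberBundle.extend V v, FiberBundle.contMDiffAt_extend I V v, FiberBundle.extend_apply_self V v⟩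

variable [I.Boundaryless]

theorem contMDiffAt_extChartAt_symm (x₀ : N) :
    ContMDiffAt 𝓘(ℝ, V) I ∞ (extChartAt I x₀).symm (extChartAt I x₀ x₀) :=
  (contMDiffOn_extChartAt_symm x₀).contMDiffAt (extChartAt_target_mem_nhds x₀)

theorem mfderiv_extChartAt_symm_self (x₀ : N) :
    mfderiv 𝓘(ℝ, V) I (extChartAt I x₀).symm (extChartAt I x₀ x₀) = ContinuousLinearMap.id ℝ V := by
  rw [← mfderivWithin_univ, ← I.range_eq_univ]
  exact mfderivWithin_range_extChartAt_symm

theorem mpullback_extChartAt_symm_self (x₀ : N) (X : (p : N) → TangentSpace I p) :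
    mpullback 𝓘(ℝ, V) I (extChartAt I x₀).symm X (extChartAt I x₀ x₀) = X x₀ := by
  rw [mpullback_apply, mfderiv_extChartAt_symm_self]
  refine (congrArg (fun L : V →L[ℝ] V => L _) ContinuousLinearMap.inverse_id).trans ?_
  exact congrArg (β := V) X (extChartAt_to_inv x₀)

theorem chartEnd_self (x₀ : N) (J : EndField I N) :
    chartEnd I x₀ J (extChartAt I x₀ x₀) = J x₀ := by
  refine pullbackEnd_apply_of_comp_eq ?_ ?_
  · rw [mfderiv_extChartAt_symm_self]
    exact ⟨.refl ℝ V, rfl⟩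
  · rw [mfderiv_extChartAt_symm_self]
    exact (congrArg (β := V →L[ℝ] V) J (extChartAt_to_inv (I := I) x₀)).symm

theorem inCoordinates_eq_chartEnd {x₀ q : N} (hq : q ∈ (chartAt A x₀).source) (J : EndField I N) :
    ContinuousLinearMap.inCoordinates V (TangentSpace I) V (TangentSpace I) x₀ q x₀ q (J q)
      = chartEnd I x₀ J (extChartAt I x₀ q) := by
  have e : (extChartAt I x₀).symm (extChartAt I x₀ q) = q :=
    (extChartAt I x₀).left_inv (by rwa [extChartAt_source])
  let L : V →L[ℝ] V := mfderiv 𝓘(ℝ, V) I (extChartAt I x₀).symm (extChartAt I x₀ q)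
  have hL : (trivializationAt V (TangentSpace I) x₀).symmL ℝ q = L := by
    rw [TangentBundle.symmL_trivializationAt hq, I.range_eq_univ, mfderivWithin_univ]
  have hL' : L.inverse = (trivializationAt V (TangentSpace I) x₀).continuousLinearMapAt ℝ q := by
    rw [← hL]
    apply ContinuousLinearMap.inverse_eq
    · ext v
      exact (trivializationAt V (TangentSpace I) x₀).symmL_continuousLinearMapAt hq v
    · ext v
      exact (trivializationAt V (TangentSpace I) x₀).continuousLinearMapAt_symmL hq v
  rw [ContinuousLinearMap.inCoordinates, hL, ← hL']
  exact (congrArg (fun p => L.inverse ∘L (J p : V →L[ℝ] V) ∘L L) e).symm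

theorem contMDiffAt_end_iff {E' : Type*} [NormedAddCommGroup E'] [NormedSpace ℝ E']
    {A' : Type*} [TopologicalSpace A'] {I' : ModelWithCorners ℝ E' A'}
    {P : Type*} [TopologicalSpace P] [ChartedSpace A' P] {b : P → N} {x : P}
    (hb : ContMDiffAt I' I ∞ b x) (J : P → EndField I N) :
    ContMDiffAt I' (I.prod 𝓘(ℝ, V →L[ℝ] V)) ∞
      (fun t => TotalSpace.mk' (V →L[ℝ] V)
        (E := fun p : N => TangentSpace I p →L[ℝ] TangentSpace I p) (b t) (J t (b t))) x ↔
    ContMDiffAt I' 𝓘(ℝ, V →L[ℝ] V) ∞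
      (fun t => chartEnd I (b x) (J t) (extChartAt I (b x) (b t))) x := by
  rw [contMDiffAt_hom_bundle, and_iff_right hb]
  refine Filter.EventuallyEq.contMDiffAt_iff ?_
  filter_upwards [hb.continuousAt.preimage_mem_nhds (chart_source_mem_nhds A (b x))] with t ht
  exact inCoordinates_eq_chartEnd ht (J t)

variable {W : Type*} [NormedAddCommGroup W] [NormedSpace ℝ W]

theorem contDiffAt_chartFamily {F : W → EndField I N} {x₀ : N} {w : W}
    (hF : ContMDiffAt (I.prod 𝓘(ℝ, W)) (I.prod 𝓘(ℝ, V →L[ℝ] V)) ∞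
      (fun q : N × W => TotalSpace.mk' (V →L[ℝ] V)
        (E := fun p : N => TangentSpace I p →L[ℝ] TangentSpace I p) q.1 (F q.2 q.1)) (x₀, w)) :
    ContDiffAt ℝ ∞ (chartFamily F x₀) (extChartAt I x₀ x₀, w) := by
  have hF' := (contMDiffAt_end_iff (b := Prod.fst) (x := (x₀, w)) contMDiffAt_fst
    fun t => F t.2).1 hF
  have hsymm : ContMDiffAt 𝓘(ℝ, V × W) (I.prod 𝓘(ℝ, W)) ∞
      (fun t : V × W => ((extChartAt I x₀).symm t.1, t.2)) (extChartAt I x₀ x₀, w) :=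
    (ContMDiffAt.comp (extChartAt I x₀ x₀, w) (f := Prod.fst) (contMDiffAt_extChartAt_symm x₀)
      contDiffAt_fst.contMDiffAt).prodMk contDiffAt_snd.contMDiffAt
  have h := hF'.comp_of_eq hsymm (by rw [extChartAt_to_inv])
  refine h.contDiffAt.congr_of_eventuallyEq ?_
  filter_upwards [continuousAt_fst.preimage_mem_nhds (extChartAt_target_mem_nhds x₀)] with t ht
  simp only [chartFamily, Function.comp_apply, (extChartAt I x₀).right_inv ht]

theorem IsAlmostComplex.contDiffAt_chartEnd {J : EndField I N} (hJ : IsAlmostComplex I J)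
    (x₀ : N) : ContDiffAt ℝ ∞ (chartEnd I x₀ J) (extChartAt I x₀ x₀) := by
  have h := contDiffAt_chartFamily (F := fun _ : ℝ => J) (w := 0)
    ((hJ.smooth x₀).comp (x₀, (0 : ℝ)) contMDiffAt_fst)
  exact h.comp (f := fun u => (u, (0 : ℝ))) _ (contDiff_prodMk_left 0).contDiffAt

variable [CompleteSpace V]

theorem SmoothFieldAt.differentiableAt_chart {x₀ : N} {X : (p : N) → TangentSpace I p}
    (hX : SmoothFieldAt I X x₀) :
    DifferentiableAt (E := V) (F := V) ℝ (mpullback 𝓘(ℝ, V) I (extChartAt I x₀).symm X)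
      (extChartAt I x₀ x₀) := by
  have inv : (mfderiv 𝓘(ℝ, V) I (extChartAt I x₀).symm (extChartAt I x₀ x₀)).IsInvertible := by
    rw [mfderiv_extChartAt_symm_self]
    exact ⟨.refl ℝ V, rfl⟩
  rw [← extChartAt_to_inv (I := I) x₀] at hX
  have h := ContMDiffAt.mpullback_vectorField_preimage (m := ∞) hX
    (contMDiffAt_extChartAt_symm x₀) inv (by simp)
  exact (contMDiffAt_vectorSpace_iff_contDiffAt.1 h).differentiableAt (by simp)

theorem IsAlmostComplex.nijenhuis_eq_nijForm {J : EndField I N} (hJ : IsAlmostComplex I J)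
    {x₀ : N} {X Y : (p : N) → TangentSpace I p} (hX : SmoothFieldAt I X x₀)
    (hY : SmoothFieldAt I Y x₀) :
    nijenhuis I J X Y x₀ = (1 / 4 : ℝ) • nijForm (V := V) (J x₀)
      (fderiv ℝ (chartEnd I x₀ J) (extChartAt I x₀ x₀)) (X x₀) (Y x₀) := by
  have hX' := hX
  have hY' := hY
  rw [← extChartAt_to_inv (I := I) x₀] at hX' hY'
  have hsq (v : V) : chartEnd I x₀ J (extChartAt I x₀ x₀)
      (chartEnd I x₀ J (extChartAt I x₀ x₀) v) = -v := by
    rw [chartEnd_self]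
    exact hJ.sq x₀ v
  refine (mpullback_extChartAt_symm_self x₀ (nijenhuis I J X Y)).symm.trans ?_
  refine (mpullback_nijenhuis_apply (contMDiffAt_extChartAt_symm x₀) hJ hX' hY').trans ?_
  refine (ProductACS.nijenhuis_eq_nijForm ((hJ.contDiffAt_chartEnd x₀).differentiableAt (by simp))
    hX.differentiableAt_chart hY.differentiableAt_chart hsq).trans ?_
  rw [chartEnd_self, mpullback_extChartAt_symm_self, mpullback_extChartAt_symm_self]

theorem IsAlmostComplex.isIntegrable_iff {J : EndField I N} (hJ : IsAlmostComplex I J) :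
    IsIntegrable I J ↔ ∀ (x₀ : N) (x y : V), nijForm (V := V) (J x₀)
      (fderiv ℝ (chartEnd I x₀ J) (extChartAt I x₀ x₀)) x y = 0 := by
  refine ⟨fun h x₀ x y => ?_, fun h => ⟨hJ, fun x₀ X Y hX hY => ?_⟩⟩
  · obtain ⟨X, hX, rfl⟩ := exists_smoothFieldAt (I := I) x₀ x
    obtain ⟨Y, hY, rfl⟩ := exists_smoothFieldAt (I := I) x₀ y
    have h₀ := h.nijenhuis_eq_zero x₀ X Y hX hY
    rw [hJ.nijenhuis_eq_nijForm hX hY] at h₀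
    exact (smul_eq_zero.1 h₀).resolve_left (by norm_num)
  · rw [hJ.nijenhuis_eq_nijForm hX hY]
    exact (congrArg (fun v : V => (1 / 4 : ℝ) • v) (h x₀ (X x₀) (Y x₀))).trans (smul_zero _)

end Chart

section Family

variable {V : Type*} [NormedAddCommGroup V] [NormedSpace ℝ V]
  {A : Type*} [TopologicalSpace A] {I : ModelWithCorners ℝ V A}
  {N : Type*} [TopologicalSpace N] [ChartedSpace A N]

/-- The values at `x₀` of a family of endomorphism fields, in the fixed normed space `V` that
`TangentSpace I x₀` unfolds to. -/
def valueAt {W : Type*} (F : W → EndField I N) (x₀ : N) : W → V →L[ℝ] V :=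
  fun w => F w x₀

theorem chartFamily_self [I.Boundaryless] [IsManifold I ∞ N] {W : Type*} (F : W → EndField I N)
    (x₀ : N) (w : W) : chartFamily F x₀ (extChartAt I x₀ x₀, w) = valueAt F x₀ w :=
  chartEnd_self x₀ (F w)

theorem continuousAt_nijForm {X : Type*} [TopologicalSpace X] {j : X → V →L[ℝ] V}
    {d : X → V →L[ℝ] V →L[ℝ] V} {a : X} (hj : ContinuousAt j a) (hd : ContinuousAt d a) (x y : V) :
    ContinuousAt (fun t => nijForm (j t) (d t) x y) a := by
  unfold nijForm
  fun_prop

variable [IsManifold I ∞ N] {W : Type*} [NormedAddCommGroup W] [NormedSpace ℂ W]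
  {F : W → EndField I N} {U : Set W} {w : W}

theorem IsHolomorphicOn.contMDiff_apply (hF : IsHolomorphicOn I F U) (hw : w ∈ U) :
    ContMDiff I (I.prod 𝓘(ℝ, V →L[ℝ] V)) ∞
      (fun p => TotalSpace.mk' (V →L[ℝ] V)
        (E := fun p : N => TangentSpace I p →L[ℝ] TangentSpace I p) p (F w p)) :=
  contMDiffOn_univ.1 (hF.smooth.comp (contMDiff_id.prodMk contMDiff_const).contMDiffOn
    fun _ _ => ⟨mem_univ _, hw⟩)

variable [I.Boundaryless]

theorem IsHolomorphicOn.contDiffAt_chartFamily (hF : IsHolomorphicOn I F U) (hU : IsOpen U)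
    (hw : w ∈ U) (x₀ : N) : ContDiffAt ℝ ∞ (chartFamily F x₀) (extChartAt I x₀ x₀, w) :=
  ProductACS.contDiffAt_chartFamily
    (hF.smooth.contMDiffAt ((isOpen_univ.prod hU).mem_nhds ⟨mem_univ _, hw⟩))

theorem IsHolomorphicOn.hasFDerivAt_chartFamily (hF : IsHolomorphicOn I F U) (hU : IsOpen U)
    (hw : w ∈ U) (x₀ : N) : HasFDerivAt (chartFamily F x₀)
      (fderiv ℝ (chartFamily F x₀) (extChartAt I x₀ x₀, w)) (extChartAt I x₀ x₀, w) :=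
  ((hF.contDiffAt_chartFamily hU hw x₀).differentiableAt (by simp)).hasFDerivAt

theorem IsHolomorphicOn.fderiv_chartEnd (hF : IsHolomorphicOn I F U) (hU : IsOpen U)
    (hw : w ∈ U) (x₀ : N) : fderiv ℝ (chartEnd I x₀ (F w)) (extChartAt I x₀ x₀) =
      fderiv ℝ (chartFamily F x₀) (extChartAt I x₀ x₀, w) ∘L ContinuousLinearMap.inl ℝ V W :=
  (HasFDerivAt.comp (f := fun u => (u, w)) _ (hF.hasFDerivAt_chartFamily hU hw x₀)
    (hasFDerivAt_prodMk_left _ w)).fderiv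

theorem IsHolomorphicOn.hasFDerivAt_valueAt (hF : IsHolomorphicOn I F U) (hU : IsOpen U)
    (hw : w ∈ U) (x₀ : N) : HasFDerivAt (valueAt F x₀)
      (fderiv ℝ (chartFamily F x₀) (extChartAt I x₀ x₀, w) ∘L ContinuousLinearMap.inr ℝ V W) w := by
  rw [← funext (chartFamily_self F x₀)]
  exact (hF.hasFDerivAt_chartFamily hU hw x₀).comp w (hasFDerivAt_prodMk_right _ w)

theorem IsHolomorphicOn.fderiv_chartFamily_I_smul (hF : IsHolomorphicOn I F U) (hU : IsOpen U)
    (hw : w ∈ U) (x₀ : N) (h : W) :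
    fderiv ℝ (chartFamily F x₀) (extChartAt I x₀ x₀, w) (0, Complex.I • h) =
      valueAt F x₀ w ∘L fderiv ℝ (chartFamily F x₀) (extChartAt I x₀ x₀, w) (0, h) := by
  have h' : fderiv ℝ (valueAt F x₀) w (Complex.I • h) =
    valueAt F x₀ w ∘L fderiv ℝ (valueAt F x₀) w h := hF.complexLinear w hw x₀ h
  rwa [(hF.hasFDerivAt_valueAt hU hw x₀).fderiv] at h'

theorem IsHolomorphicOn.isIntegrable_iff [CompleteSpace V] (hF : IsHolomorphicOn I F U)
    (hU : IsOpen U) (hw : w ∈ U) : IsIntegrable I (F w) ↔ ∀ x₀ : N,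
      (∀ v, valueAt F x₀ w (valueAt F x₀ w v) = -v) ∧
      ∀ x y, nijForm (valueAt F x₀ w) (fderiv ℝ (chartFamily F x₀) (extChartAt I x₀ x₀, w) ∘L
        ContinuousLinearMap.inl ℝ V W) x y = 0 := by
  simp only [← hF.fderiv_chartEnd hU hw]
  refine ⟨fun h x₀ => ⟨h.isAlmostComplex.sq x₀, h.isAlmostComplex.isIntegrable_iff.1 h x₀⟩,
    fun h => ?_⟩
  have hJ : IsAlmostComplex I (F w) := ⟨hF.contMDiff_apply hw, fun x₀ => (h x₀).1⟩
  exact hJ.isIntegrable_iff.2 fun x₀ => (h x₀).2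

theorem IsHolomorphicOn.isIntegrable_of_mem_closure [CompleteSpace V] (hF : IsHolomorphicOn I F U)
    (hU : IsOpen U) (hw : w ∈ U) {S : Set W} (hS : S ⊆ U)
    (hint : ∀ y ∈ S, IsIntegrable I (F y)) (hwS : w ∈ closure S) : IsIntegrable I (F w) := by
  have eq_of_eqOn {f : W → V} {v : V} (hf : ContinuousAt f w) (h : ∀ y ∈ S, f y = v) :
      f w = v := by
    simpa using hf.continuousWithinAt.mem_closure hwS (t := {v}) h
  have hint' (y) (hy : y ∈ S) := (hF.isIntegrable_iff hU (hS hy)).1 (hint y hy)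
  refine (hF.isIntegrable_iff hU hw).2 fun x₀ => ?_
  have hvalue : ContinuousAt (valueAt F x₀) w := (hF.hasFDerivAt_valueAt hU hw x₀).continuousAt
  have hderiv : ContinuousAt (fun y => fderiv ℝ (chartFamily F x₀) (extChartAt I x₀ x₀, y) ∘L
      ContinuousLinearMap.inl ℝ V W) w := by
    have h := ((hF.contDiffAt_chartFamily hU hw x₀).fderiv_right (m := 0) (by simp)).continuousAt
    exact (h.comp (f := fun y : W => (extChartAt I x₀ x₀, y)) (by fun_prop)).clm_comp
      continuousAt_const
  exact ⟨fun v => eq_of_eqOn (hvalue.clm_apply (hvalue.clm_apply continuousAt_const))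
      fun y hy => (hint' y hy x₀).1 v,
    fun u v => eq_of_eqOn (continuousAt_nijForm hvalue hderiv u v)
      fun y hy => (hint' y hy x₀).2 u v⟩

theorem IsHolomorphicOn.comp [CompleteSpace W] {W' : Type*} [NormedAddCommGroup W']
    [NormedSpace ℂ W'] (hF : IsHolomorphicOn I F U) (hU : IsOpen U) {g : W' → W} {U' : Set W'}
    (hg : AnalyticOnNhd ℂ g U') (hgU : MapsTo g U' U) :
    IsHolomorphicOn I (fun z => F (g z)) U' where
  smooth := by
    refine hF.smooth.comp (f := fun q : N × W' => (q.1, g q.2)) (fun q hq => ?_)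
      fun q hq => ⟨mem_univ _, hgU hq.2⟩
    have hgq : ContMDiffAt 𝓘(ℝ, W') 𝓘(ℝ, W) ∞ g q.2 :=
      ((hg q.2 hq.2).contDiffAt.restrict_scalars ℝ).contMDiffAt
    exact (contMDiffAt_fst.prodMk (hgq.comp q contMDiffAt_snd)).contMDiffWithinAt
  complexLinear z hz p h := by
    change fderiv ℝ (valueAt F p ∘ g) z (Complex.I • h) =
      valueAt F p (g z) ∘L fderiv ℝ (valueAt F p ∘ g) z h
    have hFg := hF.hasFDerivAt_valueAt hU (hgU hz) p
    have hgz := (hg z hz).differentiableAt.hasFDerivAt.restrictScalars ℝ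
    simp only [(hFg.comp z hgz).fderiv, ContinuousLinearMap.comp_apply,
      ContinuousLinearMap.coe_restrictScalars', map_smul, ContinuousLinearMap.inr_apply]
    exact hF.fderiv_chartFamily_I_smul hU (hgU hz) p _

end Family

section Product

theorem nijForm_prodMap_eq_zero {V Z : Type*} [NormedAddCommGroup V] [NormedSpace ℝ V]
    [NormedAddCommGroup Z] [NormedSpace ℝ Z] {j : V →L[ℝ] V} {i : Z →L[ℝ] Z}
    {d : V × Z →L[ℝ] V →L[ℝ] V} (hd : ∀ h, d (0, i h) = j ∘L d (0, h))
    (hj : ∀ x y, nijForm j (d ∘L ContinuousLinearMap.inl ℝ V Z) x y = 0) (x y : V × Z) :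
    nijForm (j.prodMap i) (ContinuousLinearMap.prodMapL ℝ V V Z Z ∘L d.prod 0) x y = 0 := by
  obtain ⟨x, a⟩ := x
  obtain ⟨y, b⟩ := y
  have split (v : V) (h : Z) (w : V) : d (v, h) w = d (v, 0) w + d (0, h) w := by
    rw [← add_apply, ← map_add, Prod.mk_add_mk, add_zero, zero_add]
  have mixed (h : Z) (w : V) : d (0, i h) w = j (d (0, h) w) := DFunLike.congr_fun (hd h) w
  have fibre : d (j x, 0) y - d (j y, 0) x + j (d (y, 0) x) - j (d (x, 0) y) = 0 := hj x y
  refine Prod.ext ?_ ?_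
  · change d (j x, i a) y - d (j y, i b) x + j (d (y, b) x) - j (d (x, a) y) = 0
    rw [split (j x), split (j y), split y, split x, mixed, mixed, map_add, map_add, ← fibre]
    abel
  · change (0 : Z) - 0 + i 0 - i 0 = 0
    simp only [map_zero, sub_zero, add_zero]

theorem IsAlmostComplex.nijenhuis_eq_lieDerivEnd {V : Type*} [NormedAddCommGroup V]
    [NormedSpace ℝ V] {A : Type*} [TopologicalSpace A] {I : ModelWithCorners ℝ V A}
    {N : Type*} [TopologicalSpace N] [ChartedSpace A N] [IsManifold I ∞ N] {J : EndField I N}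
    (hJ : IsAlmostComplex I J) (X Y : (p : N) → TangentSpace I p) (p : N) :
    nijenhuis I J X Y p = (1 / 4 : ℝ) • (lieDerivEnd I J (applyField I J X) Y p
      - J p (lieDerivEnd I J X Y p)) := by
  rw [nijenhuis, lieDerivEnd, lieDerivEnd, map_sub, hJ.sq]
  congr 1
  abel

theorem hasMFDerivAt_extChartAt_symm_opens {E : Type*} [NormedAddCommGroup E] [NormedSpace ℝ E]
    {Δ : Opens E} (z : Δ) {w : E} (hw : w ∈ Δ) :
    HasMFDerivAt 𝓘(ℝ, E) 𝓘(ℝ, E) (extChartAt 𝓘(ℝ, E) z).symm w (ContinuousLinearMap.id ℝ E) := by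
  have h := ((contMDiffAt_extChartAt_symm (I := 𝓘(ℝ, E)) (⟨w, hw⟩ : Δ)).mdifferentiableAt
    (by simp)).hasMFDerivAt
  rwa [mfderiv_extChartAt_symm_self] at h

variable {V : Type*} [NormedAddCommGroup V] [NormedSpace ℝ V]
  {M : Type*} [TopologicalSpace M] [ChartedSpace V M] [IsManifold 𝓘(ℝ, V) ∞ M]
  {Δ : Opens ℂ}

theorem mfderiv_extChartAt_symm_prodModel (q : M × Δ) {t : V × ℂ}
    (ht : t.1 ∈ (extChartAt 𝓘(ℝ, V) q.1).target) (htΔ : t.2 ∈ Δ) :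
    mfderiv 𝓘(ℝ, V × ℂ) (prodModel V) (extChartAt (prodModel V) q).symm t =
      (mfderiv 𝓘(ℝ, V) 𝓘(ℝ, V) (extChartAt 𝓘(ℝ, V) q.1).symm t.1).prodMap
        (ContinuousLinearMap.id ℝ ℂ) := by
  have hM : MDifferentiableAt 𝓘(ℝ, V) 𝓘(ℝ, V) (extChartAt 𝓘(ℝ, V) q.1).symm t.1 :=
    ((contMDiffOn_extChartAt_symm (n := ∞) q.1).contMDiffAt
      ((isOpen_extChartAt_target q.1).mem_nhds ht)).mdifferentiableAt (by simp)
  rw [extChartAt_prod]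
  exact ((hM.hasMFDerivAt.comp t hasFDerivAt_fst.hasMFDerivAt).prodMk
    ((hasMFDerivAt_extChartAt_symm_opens q.2 htΔ).comp t hasFDerivAt_snd.hasMFDerivAt)).mfderiv

variable {F : ℂ → EndField 𝓘(ℝ, V) M}

theorem chartEnd_productStructure {q : M × Δ} {t : V × ℂ}
    (ht : t.1 ∈ (extChartAt 𝓘(ℝ, V) q.1).target) (htΔ : t.2 ∈ Δ) :
    chartEnd (prodModel V) q (productStructure F Δ) t =
      (chartFamily F q.1 t).prodMap (Complex.I • ContinuousLinearMap.id ℝ ℂ) := by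
  have hz : (extChartAt 𝓘(ℝ, ℂ) q.2).symm t.2 = (⟨t.2, htΔ⟩ : Δ) :=
    (extChartAt 𝓘(ℝ, ℂ) q.2).left_inv (mem_extChartAt_source (⟨t.2, htΔ⟩ : Δ))
  have inv := isInvertible_mfderivWithin_extChartAt_symm (I := 𝓘(ℝ, V)) ht
  rw [ModelWithCorners.range_eq_univ, mfderivWithin_univ] at inv
  refine pullbackEnd_apply_of_comp_eq ?_ ?_
  · rw [mfderiv_extChartAt_symm_prodModel q ht htΔ]
    obtain ⟨e, he⟩ := inv
    exact ⟨e.prodCongr (.refl ℝ ℂ), congrArg (ContinuousLinearMap.prodMap · (.id ℝ ℂ)) he⟩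
  · rw [mfderiv_extChartAt_symm_prodModel q ht htΔ, productStructure, extChartAt_prod]
    refine ContinuousLinearMap.ext fun v => Prod.ext ?_ rfl
    refine (inv.self_apply_inverse _).trans ?_
    exact congrArg (fun z : Δ => (F z _ : V →L[ℝ] V) _) hz.symm

theorem chartEnd_productStructure_eventuallyEq (F : ℂ → EndField 𝓘(ℝ, V) M) (q : M × Δ) :
    chartEnd (prodModel V) q (productStructure F Δ) =ᶠ[𝓝 (extChartAt (prodModel V) q q)]
      fun t => (chartFamily F q.1 t).prodMap (Complex.I • ContinuousLinearMap.id ℝ ℂ) := by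
  filter_upwards [prod_mem_nhds (extChartAt_target_mem_nhds (I := 𝓘(ℝ, V)) q.1)
    (Δ.isOpen.mem_nhds q.2.2)] with t ht
  exact chartEnd_productStructure ht.1 ht.2

theorem IsHolomorphicOn.fderiv_chartEnd_productStructure (hF : IsHolomorphicOn 𝓘(ℝ, V) F Δ)
    (q : M × Δ) :
    fderiv ℝ (chartEnd (prodModel V) q (productStructure F Δ)) (extChartAt (prodModel V) q q) =
      ContinuousLinearMap.prodMapL ℝ V V ℂ ℂ ∘L
        (fderiv ℝ (chartFamily F q.1) (extChartAt 𝓘(ℝ, V) q.1 q.1, (q.2 : ℂ))).prod 0 := by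
  rw [(chartEnd_productStructure_eventuallyEq F q).fderiv_eq]
  exact ((ContinuousLinearMap.prodMapL ℝ V V ℂ ℂ).hasFDerivAt.comp _
    ((hF.hasFDerivAt_chartFamily Δ.isOpen q.2.2 q.1).prodMk (hasFDerivAt_const
      (Complex.I • ContinuousLinearMap.id ℝ ℂ : ℂ →L[ℝ] ℂ) _))).fderiv

theorem IsHolomorphicOn.isAlmostComplex_productStructure (hF : IsHolomorphicOn 𝓘(ℝ, V) F Δ)
    (hJ : ∀ z ∈ Δ, IsAlmostComplex 𝓘(ℝ, V) (F z)) :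
    IsAlmostComplex (prodModel V) (productStructure F Δ) where
  smooth q := by
    refine (contMDiffAt_end_iff (b := fun t : M × Δ => t) contMDiffAt_id _).2 ?_
    have hchart : ContMDiffAt (prodModel V) 𝓘(ℝ, V × ℂ) ∞ (extChartAt (prodModel V) q) q :=
      contMDiffAt_extChartAt
    have hfamily : ContMDiffAt 𝓘(ℝ, V × ℂ) 𝓘(ℝ, V →L[ℝ] V) ∞ (chartFamily F q.1)
        (extChartAt (prodModel V) q q) :=
      (hF.contDiffAt_chartFamily Δ.isOpen q.2.2 q.1).contMDiffAt
    exact ((hfamily.comp q hchart).clm_prodMap (contMDiffAt_const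
      (c := (Complex.I • ContinuousLinearMap.id ℝ ℂ : ℂ →L[ℝ] ℂ)))).congr_of_eventuallyEq
        ((continuousAt_extChartAt q).eventually (chartEnd_productStructure_eventuallyEq F q))
  sq q v := by
    refine Prod.ext ((hJ q.2 q.2.2).sq q.1 (v : V × ℂ).1) ?_
    change Complex.I * (Complex.I * (v : V × ℂ).2) = -(v : V × ℂ).2
    rw [← mul_assoc, Complex.I_mul_I, neg_one_mul]

theorem IsHolomorphicOn.isIntegrable_productStructure [CompleteSpace V]
    (hF : IsHolomorphicOn 𝓘(ℝ, V) F Δ) (hint : ∀ z ∈ Δ, IsIntegrable 𝓘(ℝ, V) (F z)) :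
    IsIntegrable (prodModel V) (productStructure F Δ) := by
  refine (hF.isAlmostComplex_productStructure
    fun z hz => (hint z hz).isAlmostComplex).isIntegrable_iff.2 fun q => ?_
  rw [hF.fderiv_chartEnd_productStructure]
  exact nijForm_prodMap_eq_zero (hF.fderiv_chartFamily_I_smul Δ.isOpen q.2.2 q.1)
    ((hF.isIntegrable_iff Δ.isOpen q.2.2).1 (hint q.2 q.2.2) q.1).2

theorem IsHolomorphicOn.productIsIntegrable [CompleteSpace V]
    (hF : IsHolomorphicOn 𝓘(ℝ, V) F Δ) (hint : ∀ z ∈ Δ, IsIntegrable 𝓘(ℝ, V) (F z)) :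
    ProductIsIntegrable F Δ := by
  have h := hF.isIntegrable_productStructure hint
  refine ⟨h, fun q X Y hX hY _ _ => ?_⟩
  have hXY := h.isAlmostComplex.nijenhuis_eq_lieDerivEnd X Y q
  exact ⟨hXY, hXY.symm.trans (h.nijenhuis_eq_zero q X Y hX hY)⟩

end Product

end

end ProductACS

theorem product_complex_structure_is_integrable_general
    {V : Type*} [NormedAddCommGroup V] [NormedSpace ℝ V] [CompleteSpace V]
    {M : Type*} [TopologicalSpace M] [ChartedSpace V M] [IsManifold 𝓘(ℝ, V) ∞ M]
    {H : Type*} [NormedAddCommGroup H] [NormedSpace ℂ H] [CompleteSpace H]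
    {Φ : H → EndField 𝓘(ℝ, V) M} {U : Set H} (hΦ : IsHolomorphicOn 𝓘(ℝ, V) Φ U) (hU : IsOpen U)
    {Δ : Opens ℂ} {g : ℂ → H} (hg : DifferentiableOn ℂ g Δ) (hgU : ∀ z ∈ Δ, g z ∈ U)
    {S : Set ℂ} (hS : Dense S) (hint : ∀ z ∈ Δ, z ∈ S → IsIntegrable 𝓘(ℝ, V) (Φ (g z))) :
    IsHolomorphicOn 𝓘(ℝ, V) (fun z => Φ (g z)) Δ ∧ ProductIsIntegrable (fun z => Φ (g z)) Δ := by
  have hol := hΦ.comp hU (hg.analyticOnNhd Δ.isOpen) hgU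
  exact ⟨hol, hol.productIsIntegrable fun z hz => hol.isIntegrable_of_mem_closure Δ.isOpen hz
    inter_subset_left (fun y hy => hint y hy.1 hy.2) (hS.open_subset_closure_inter Δ.isOpen hz)⟩

theorem product_complex_structure_is_integrable
    {V : Type*} [NormedAddCommGroup V] [NormedSpace ℝ V] [FiniteDimensional ℝ V]
    {M : Type*} [TopologicalSpace M] [ChartedSpace V M] [IsManifold 𝓘(ℝ, V) ∞ M]
    [CompactSpace M] [T2Space M]
    (σ : FormField 𝓘(ℝ, V) M) (hσ : IsSymplectic 𝓘(ℝ, V) σ)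
    (G : Type*) [Group G] [MulAction G M]
    (hG : ∀ g : G, ContMDiff 𝓘(ℝ, V) 𝓘(ℝ, V) ∞ (fun p : M => g • p)) :
    -- holomorphic maps from a disk to `𝒥^G` with integrable values off the centre
    (∀ (c : ℂ) (δ : ℝ), 0 < δ → ∀ F : ℂ → EndField 𝓘(ℝ, V) M,
      (∀ z ∈ disk c δ, IsInvariantCompatible 𝓘(ℝ, V) σ G (F z)) →
      IsHolomorphicOn 𝓘(ℝ, V) F (disk c δ) →
      (∀ z ∈ disk c δ, z ≠ c → IsIntegrable 𝓘(ℝ, V) (F z)) →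
      ProductIsIntegrable F (disk c δ)) ∧
    -- the maps `z ↦ Φ₁(ρ(z) · x)`, where `orb` is `z ↦ ρ(z) · x`, extended to `0` by its limit
    (∀ (H : Type*) [NormedAddCommGroup H] [NormedSpace ℂ H] [FiniteDimensional ℂ H]
      (KC : Type*) [Group KC] (rep : KC →* (H →L[ℂ] H))
      (r : ℝ) (Φ₁ : H → EndField 𝓘(ℝ, V) M),
      (∀ y ∈ Metric.ball (0 : H) r, IsInvariantCompatible 𝓘(ℝ, V) σ G (Φ₁ y)) →
      IsHolomorphicOn 𝓘(ℝ, V) Φ₁ (Metric.ball (0 : H) r) →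
      (∀ (k : KC), ∀ y ∈ Metric.ball (0 : H) r, rep k y ∈ Metric.ball (0 : H) r →
        IsIntegrable 𝓘(ℝ, V) (Φ₁ y) →
        OnComplexifiedOrbit 𝓘(ℝ, V) σ G (Φ₁ y) (Φ₁ (rep k y))) →
      ∀ x ∈ Metric.ball (0 : H) r, IsIntegrable 𝓘(ℝ, V) (Φ₁ x) →
      ∀ (ρ : ℂˣ →* KC) (orb : ℂ → H), (∀ u : ℂˣ, orb u = rep (ρ u) x) →
      DifferentiableOn ℂ orb {0}ᶜ → Tendsto orb (𝓝[≠] 0) (𝓝 (orb 0)) →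
      ∀ δ : ℝ, 0 < δ → (∀ z ∈ disk 0 δ, orb z ∈ Metric.ball (0 : H) r) →
      IsHolomorphicOn 𝓘(ℝ, V) (fun z => Φ₁ (orb z)) (disk 0 δ) ∧
      ProductIsIntegrable (fun z => Φ₁ (orb z)) (disk 0 δ)) := by
  have : CompleteSpace V := FiniteDimensional.complete ℝ V
  refine ⟨fun c δ _ F _ hF hint => (product_complex_structure_is_integrable_general hF
    Metric.isOpen_ball differentiableOn_id (fun _ => id) (dense_compl_singleton c) hint).2, ?_⟩
  intro H _ _ _ KC _ rep r Φ₁ hΦ₁ hol heq x hx hxint ρ orb horb hdiff hlim δ hδ horbB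
  have : CompleteSpace H := FiniteDimensional.complete ℂ H
  have hdiff' : DifferentiableOn ℂ orb (disk 0 δ) :=
    (Complex.differentiableOn_compl_singleton_and_continuousAt_iff (Metric.ball_mem_nhds 0 hδ)).1
      ⟨hdiff.mono fun _ hz => hz.2, continuousAt_iff_punctured_nhds.2 hlim⟩
  refine product_complex_structure_is_integrable_general hol Metric.isOpen_ball hdiff' horbB
    (dense_compl_singleton 0) fun z hz hz0 => ?_
  obtain ⟨k, hk⟩ : ∃ k, orb z = rep k x := ⟨_, horb (Units.mk0 z hz0)⟩
  have hkx : rep k x ∈ Metric.ball (0 : H) r := hk ▸ horbB z hz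
  exact hk ▸ (heq k x hx hkx hxint).isIntegrable hxint (hΦ₁ _ hkx).isAlmostComplex
end

section
/- Let $X$ be a compact connected complex manifold of dimension $n$ and $L\to X$ a holomorphic line bundle with a smooth Hermitian metric $h$ whose curvature form $\omega=-\sqrt{-1}\,\partial\bar\partial\log h$ is positive; thus $(X,L)$ is polarized and $\omega$ is a Kähler form in $c_1(L)$ (up to the usual factor $2\pi$). Let $J$ be the complex structure of $X$, let $\mathcal H=\{\phi\in C^\infty(X,\mathbb R):\omega_\phi:=\omega+\sqrt{-1}\,\partial\bar\partial\phi>0\}$, and for $\phi\in\mathcal H$ let $g_\phi$, $S(\phi)$, $d\mu_\phi=\omega_\phi^n/n!$ be the metric of $\omega_\phi$, its scalar curvature and its volume form, and $\underline S$ the mean value of $S(\phi)$. Let $\mathrm{Aut}(X,L)$ be the group of holomorphic automorphisms of $X$ that lift to holomorphic automorphisms of $L$, linear on the fibres, with the compact-open topology. For a compact connected subgroup $G\subseteq\mathrm{Aut}(X,L)$ that preserves $\omega$, the elements of $\mathrm{Lie}(G)$ are regarded as vector fields on $X$, and $\mathcal H^G$ is the set of $G$-invariant $\phi\in\mathcal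 H$. For $\phi\in\mathcal H^G$ let $P^G_\phi$ be the space of smooth functions $f$ with $\int_X f\,d\mu_\phi=0$ such that $J\nabla_{g_\phi}f$ is a Killing vector field of $g_\phi$ lying in $\mathrm{Lie}(G)$, let $\Pi^G_\phi$ be the $L^2(d\mu_\phi)$-orthogonal projection to $P^G_\phi$, and let $S^G(\phi)=S(\phi)-\underline S-\Pi^G_\phi S(\phi)$. The extremal vector field $V^G$ is the vector field defined by $V^G=\nabla_{g_\phi}\bigl(\Pi^G_\phi S(\phi)\bigr)$ for any $\phi\in\mathcal H^G$. A modified K-energy $E^G$ is a function on $\mathcal H^G$ that is a primitive of the one-form $\phi\mapsto -S^G(\phi)\,d\mu_\phi$, i.e. $\frac{d}{dt}\big|_{t=0}E^G(\phi+t\psi)=-\int_X\psi\,S^G(\phi)\,d\mu_\phi$ for all $\phi\in\mathcal H^G$ and all $G$-invariant $\psi\in C^\infty(X,\mathbb R)$. Let $G^m$ be a maximal compact connected subgroup of $\mathrm{Aut}(X,L)$ that preserves $\omega$, and let $G\subseteq G^m$ be a compact connected subgroup such that $JV^{G^m}\in\mathrm{Lie}(G)$. Then there is a constant $c$ with $E^{G^m}(\phi)=E^G(\phi)+c$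 for all $\phi\in\mathcal H^{G^m}$. Consequently, if $\phi_0\in\mathcal H^{G^m}$ minimises $E^G$ on $\mathcal H^G$, then $\phi_0$ minimises $E^{G^m}$ on $\mathcal H^{G^m}$. -/
open scoped Manifold ContDiff Bundle ComplexOrder
open MeasureTheory Bundle

noncomputable section

namespace KahlerPol

/-- The model space `ℂⁿ`. -/
abbrev Cn (n : ℕ) : Type := Fin n → ℂ

/-- The operator `∂/∂z_j = (∂/∂x_j - i ∂/∂y_j)/2` on functions on `ℂⁿ`. -/
def dz {n : ℕ} (j : Fin n) (F : Cn n → ℂ) (z : Cn n) : ℂ :=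
  (1 / 2) * (fderiv ℝ F z (Pi.single j 1) - Complex.I * fderiv ℝ F z (Pi.single j Complex.I))

/-- The operator `∂/∂z̄_j = (∂/∂x_j + i ∂/∂y_j)/2` on functions on `ℂⁿ`. -/
def dzbar {n : ℕ} (j : Fin n) (F : Cn n → ℂ) (z : Cn n) : ℂ :=
  (1 / 2) * (fderiv ℝ F z (Pi.single j 1) + Complex.I * fderiv ℝ F z (Pi.single j Complex.I))

/-- The complex Hessian `(∂²F/∂z_j∂z̄_k)_{jk}` of a real function on `ℂⁿ`, i.e. the coefficient
matrix of the real `(1,1)`-form `√-1 ∂∂̄F = √-1 ∑ F_{jk̄} dz_j ∧ dz̄_k`. -/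
def complexHessian {n : ℕ} (F : Cn n → ℝ) (z : Cn n) : Matrix (Fin n) (Fin n) ℂ :=
  Matrix.of fun j k => dz j (dzbar k fun w => (F w : ℂ)) z

section Manifold

variable {n : ℕ} {X : Type*} [TopologicalSpace X] [ChartedSpace (Cn n) X]

/-- Smooth real functions on the complex manifold `X`. -/
def Smooth (n : ℕ) {X : Type*} [TopologicalSpace X] [ChartedSpace (Cn n) X] (f : X → ℝ) : Prop :=
  ContMDiff 𝓘(ℝ, Cn n) 𝓘(ℝ, ℝ) ∞ f

/-- Real vector fields on `X`; the real tangent space at `x` is `ℂⁿ`, through the preferred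
chart at `x`. -/
abbrev VField (n : ℕ) (X : Type*) [TopologicalSpace X] [ChartedSpace (Cn n) X] : Type _ :=
  ∀ x : X, TangentSpace 𝓘(ℝ, Cn n) x

/-- The complex structure `J` of `X` on a tangent space. -/
def J {x : X} (v : TangentSpace 𝓘(ℝ, Cn n) x) : TangentSpace 𝓘(ℝ, Cn n) x :=
  (Complex.I • (show Cn n from v) : Cn n)

/-- The compact-open topology on groups of homeomorphisms: `G` seen inside `C(X, X)`. -/
def asMaps {X : Type*} [TopologicalSpace X] (G : Subgroup (X ≃ₜ X)) : Set C(X, X) :=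
  (fun σ : X ≃ₜ X => (⟨σ, σ.continuous⟩ : C(X, X))) '' (G : Set (X ≃ₜ X))

/-- `G` is a compact connected group of transformations. -/
def IsCompactConnected {X : Type*} [TopologicalSpace X] (G : Subgroup (X ≃ₜ X)) : Prop :=
  IsCompact (asMaps G) ∧ IsConnected (asMaps G)

/-- The Lie algebra of `G`, as a set of vector fields on `X`: the vector fields that generate a
continuous one-parameter subgroup of `G`. -/
def lieAlg (G : Subgroup (X ≃ₜ X)) : Set (VField n X) :=
  {V | ∃ γ : ℝ → X ≃ₜ X, (∀ t, γ t ∈ G) ∧ (∀ s t, γ (s + t) = γ s * γ t) ∧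
    Continuous (fun p : ℝ × X => γ p.1 p.2) ∧ ∀ x, IsMIntegralCurve (fun t => γ t x) V}

/-- `f` is constant along the orbits of `G`. -/
def IsInvariant {X : Type*} [TopologicalSpace X] (G : Subgroup (X ≃ₜ X)) (f : X → ℝ) : Prop :=
  ∀ σ ∈ G, ∀ x, f (σ x) = f x

end Manifold

section Bundle

variable {n : ℕ} {X : Type*} [TopologicalSpace X] [ChartedSpace (Cn n) X]
  (L : X → Type*) [TopologicalSpace (TotalSpace ℂ L)] [∀ x, TopologicalSpace (L x)]
  [∀ x, AddCommGroup (L x)] [∀ x, Module ℂ (L x)] [FiberBundle ℂ L]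

/-- The group `Aut(X, L)` of the holomorphic automorphisms of `X` that lift to a holomorphic
automorphism of the line bundle `L`, linear on the fibres. -/
def autGroup (n : ℕ) {X : Type*} [TopologicalSpace X] [ChartedSpace (Cn n) X]
    (L : X → Type*) [TopologicalSpace (TotalSpace ℂ L)] [∀ x, TopologicalSpace (L x)]
    [∀ x, AddCommGroup (L x)] [∀ x, Module ℂ (L x)] [FiberBundle ℂ L] :
    Subgroup (X ≃ₜ X) where
  carrier := {σ | ContMDiff 𝓘(ℂ, Cn n) 𝓘(ℂ, Cn n) ω σ ∧
    ContMDiff 𝓘(ℂ, Cn n) 𝓘(ℂ, Cn n) ω σ.symm ∧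
    ∃ Ψ : Diffeomorph (𝓘(ℂ, Cn n).prod 𝓘(ℂ, ℂ)) (𝓘(ℂ, Cn n).prod 𝓘(ℂ, ℂ))
        (TotalSpace ℂ L) (TotalSpace ℂ L) ω,
      ∀ x y, σ x = y → ∃ A : L x ≃ₗ[ℂ] L y, ∀ v, Ψ ⟨x, v⟩ = ⟨y, A v⟩}
  one_mem' := by
    refine ⟨contMDiff_id, contMDiff_id, Diffeomorph.refl _ _ _, ?_⟩
    rintro x y rfl
    exact ⟨LinearEquiv.refl ℂ _, fun v => rfl⟩
  mul_mem' := by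
    rintro σ τ ⟨h1, h2, Ψ, hΨ⟩ ⟨k1, k2, Φ, hΦ⟩
    refine ⟨h1.comp k1, k2.comp h2, Φ.trans Ψ, ?_⟩
    rintro x y rfl
    obtain ⟨A, hA⟩ := hΦ x _ rfl
    obtain ⟨B, hB⟩ := hΨ (τ x) _ rfl
    exact ⟨A.trans B, fun v => by
      simp only [Diffeomorph.coe_trans, Function.comp_apply, hA, hB]; rfl⟩
  inv_mem' := by
    rintro σ ⟨h1, h2, Ψ, hΨ⟩
    refine ⟨h2, h1, Ψ.symm, ?_⟩
    rintro y x hx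
    have hx' : σ x = y := by rw [← hx]; exact σ.apply_symm_apply y
    obtain ⟨A, hA⟩ := hΨ x y hx'
    refine ⟨A.symm, fun v => ?_⟩
    have := hA (A.symm v)
    rw [A.apply_symm_apply] at this
    rw [← this]
    exact Ψ.symm_apply_apply _

/-- `G` is a maximal compact connected subgroup of `Aut(X, L)`. -/
def IsMaximalCompactConnected (n : ℕ) {X : Type*} [TopologicalSpace X] [ChartedSpace (Cn n) X]
    (L : X → Type*) [TopologicalSpace (TotalSpace ℂ L)] [∀ x, TopologicalSpace (L x)]
    [∀ x, AddCommGroup (L x)] [∀ x, Module ℂ (L x)] [FiberBundle ℂ L]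
    (G : Subgroup (X ≃ₜ X)) : Prop :=
  Maximal (fun K : Subgroup (X ≃ₜ X) => K ≤ autGroup n L ∧ IsCompactConnected K) G

/-- A smooth Hermitian metric on the line bundle `L`, given by the squared length of vectors. -/
structure HermitianMetric (n : ℕ) {X : Type*} [TopologicalSpace X] [ChartedSpace (Cn n) X]
    (L : X → Type*) [TopologicalSpace (TotalSpace ℂ L)] [∀ x, TopologicalSpace (L x)]
    [∀ x, AddCommGroup (L x)] [∀ x, Module ℂ (L x)] [FiberBundle ℂ L] [VectorBundle ℂ ℂ L] where
  normSq : ∀ x, L x → ℝ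
  normSq_smul : ∀ x (c : ℂ) (v : L x), normSq x (c • v) = ‖c‖ ^ 2 * normSq x v
  normSq_pos : ∀ x (v : L x), v ≠ 0 → 0 < normSq x v
  /-- The squared length of the local frames of `L` is smooth. -/
  smooth : ∀ x, ContMDiffOn 𝓘(ℝ, Cn n) 𝓘(ℝ, ℝ) ∞
    (fun y => normSq y ((trivializationAt ℂ L x).symm y 1)) (trivializationAt ℂ L x).baseSet

variable {L} [VectorBundle ℂ ℂ L] (h : HermitianMetric n L)

namespace HermitianMetric

/-- The domain of the preferred chart at `x` and of the preferred frame of `L` near `x`. -/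
def chartDomain (_h : HermitianMetric n L) (x : X) : Set X :=
  (chartAt (Cn n) x).source ∩ (trivializationAt ℂ L x).baseSet

/-- The local weight `-log |s|²_h` of `h`, for the preferred frame `s` of `L` near `x`. -/
def weight (x y : X) : ℝ :=
  -Real.log (h.normSq y ((trivializationAt ℂ L x).symm y 1))

/-- The matrix `(g_{jk̄})` at the point with coordinates `z`, in the preferred chart at `x`, of the
form `ω_φ = ω + √-1 ∂∂̄φ = √-1 ∑ g_{jk̄} dz_j ∧ dz̄_k`, where `ω = -√-1 ∂∂̄ log h` is the curvature
form of `h`. -/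
def metricMatrix (φ : X → ℝ) (x : X) (z : Cn n) : Matrix (Fin n) (Fin n) ℂ :=
  complexHessian (fun w => h.weight x ((chartAt (Cn n) x).symm w) +
    φ ((chartAt (Cn n) x).symm w)) z

/-- The Riemannian metric `2 Re ∑ g_{jk̄} v_j w̄_k` of `ω_φ` in the preferred chart at `x`. -/
def localMetric (φ : X → ℝ) (x : X) (z v w : Cn n) : ℝ :=
  2 * (∑ j, ∑ k, h.metricMatrix φ x z j k * v j * starRingEnd ℂ (w k)).re

/-- The Riemannian metric `g_φ` of `ω_φ` on the tangent space at `x`. -/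
def metric (φ : X → ℝ) (x : X) (v w : TangentSpace 𝓘(ℝ, Cn n) x) : ℝ :=
  h.localMetric φ x (chartAt (Cn n) x x) v w

/-- The 2-form `ω_φ = g_φ(J·, ·)`. -/
def form (φ : X → ℝ) (x : X) (v w : TangentSpace 𝓘(ℝ, Cn n) x) : ℝ :=
  h.metric φ x (J v) w

/-- `σ*ω = ω` for all `σ` in `G`, where `ω` is the curvature form of `h`. -/
def FormInvariant (G : Subgroup (X ≃ₜ X)) : Prop :=
  ∀ σ ∈ G, ∀ (x : X) (v w : TangentSpace 𝓘(ℝ, Cn n) x),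
    h.form 0 (σ x) (mfderiv 𝓘(ℝ, Cn n) 𝓘(ℝ, Cn n) σ x v) (mfderiv 𝓘(ℝ, Cn n) 𝓘(ℝ, Cn n) σ x w) =
      h.form 0 x v w

/-- The space `ℋ` of Kähler potentials: smooth `φ` with `ω_φ > 0`. -/
def potentials : Set (X → ℝ) :=
  {φ | Smooth n φ ∧ ∀ x, (h.metricMatrix φ x (chartAt (Cn n) x x)).PosDef}

/-- The space `ℋ^G` of `G`-invariant Kähler potentials. -/
def invPotentials (G : Subgroup (X ≃ₜ X)) : Set (X → ℝ) :=
  {φ | φ ∈ h.potentials ∧ IsInvariant G φ}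

/-- The scalar curvature `S(φ) = 2 ∑ g^{jk̄} R_{jk̄}` of `g_φ`, where
`R_{jk̄} = -∂²/∂z_j∂z̄_k log det g` is the Ricci curvature. -/
def scalarCurvature (φ : X → ℝ) (x : X) : ℝ :=
  2 * ((h.metricMatrix φ x (chartAt (Cn n) x x))⁻¹ *
    -complexHessian (fun w => Real.log (h.metricMatrix φ x w).det.re)
      (chartAt (Cn n) x x)).trace.re

/-- `V = ∇_{g_φ} f`. -/
def IsGradient (φ f : X → ℝ) (V : VField n X) : Prop :=
  ∀ (x : X) (w : TangentSpace 𝓘(ℝ, Cn n) x),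
    h.metric φ x (V x) w = (mfderiv 𝓘(ℝ, Cn n) 𝓘(ℝ, ℝ) f x w : ℝ)

/-- The components of `V` in the preferred chart at `x`. -/
def _root_.KahlerPol.localField (V : VField n X) (x : X) (z : Cn n) : Cn n :=
  mfderiv 𝓘(ℝ, Cn n) 𝓘(ℝ, Cn n) (chartAt (Cn n) x) ((chartAt (Cn n) x).symm z)
    (V ((chartAt (Cn n) x).symm z))

/-- `V` is a Killing vector field of `g_φ`: the Lie derivative of `g_φ` along `V`, written in
coordinates, vanishes. -/
def IsKilling (φ : X → ℝ) (V : VField n X) : Prop :=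
  ∀ (x : X) (v w : Cn n),
    fderiv ℝ (fun z => h.localMetric φ x z v w) (chartAt (Cn n) x x)
        (localField V x (chartAt (Cn n) x x)) +
      h.localMetric φ x (chartAt (Cn n) x x)
        (fderiv ℝ (localField V x) (chartAt (Cn n) x x) v) w +
      h.localMetric φ x (chartAt (Cn n) x x) v
        (fderiv ℝ (localField V x) (chartAt (Cn n) x x) w) = 0

variable [CompactSpace X] [T2Space X]

theorem exists_partition : ∃ ρ : PartitionOfUnity X X Set.univ, ρ.IsSubordinate h.chartDomain :=
  PartitionOfUnity.exists_isSubordinate isClosed_univ _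
    (fun x => (chartAt (Cn n) x).open_source.inter (trivializationAt ℂ L x).open_baseSet)
    (fun x _ => Set.mem_iUnion.2
      ⟨x, mem_chart_source (Cn n) x, FiberBundle.mem_baseSet_trivializationAt' x⟩)

/-- A partition of unity subordinate to the domains of the preferred charts and frames. -/
def partition : PartitionOfUnity X X Set.univ := h.exists_partition.choose

variable [MeasurableSpace X]

/-- The volume measure `dμ_φ = ω_φⁿ/n!` of `g_φ`, whose density in the chart at `x` with respect to
Lebesgue measure is `2ⁿ det(g_{jk̄})`; the local measures are glued with a partition of unity. -/
def volume (φ : X → ℝ) : Measure X :=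
  Measure.sum fun x =>
    Measure.map (chartAt (Cn n) x).symm
      ((MeasureTheory.volume.restrict (chartAt (Cn n) x).target).withDensity fun z =>
        ENNReal.ofReal (h.partition x ((chartAt (Cn n) x).symm z) *
          (2 ^ n * (h.metricMatrix φ x z).det.re)))

/-- The mean value of the scalar curvature of `g_φ`. -/
def meanScalar (φ : X → ℝ) : ℝ := ⨍ x, h.scalarCurvature φ x ∂(h.volume φ)

/-- The space `P^G_φ` of the Killing potentials of `g_φ` of mean value zero whose Hamiltonian vector
field `J∇f` lies in the Lie algebra of `G`. -/
def killingPotentials (G : Subgroup (X ≃ₜ X)) (φ : X → ℝ) : Set (X → ℝ) :=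
  {f | Smooth n f ∧ ∫ x, f x ∂(h.volume φ) = 0 ∧
    ∃ V : VField n X, h.IsGradient φ f V ∧ h.IsKilling φ (fun x => J (V x)) ∧
      (fun x => J (V x)) ∈ lieAlg G}

/-- `f` is the orthogonal projection of `u` to `P^G_φ`, for the inner product of `L²(dμ_φ)`. -/
def IsKillingProjection (G : Subgroup (X ≃ₜ X)) (φ u f : X → ℝ) : Prop :=
  f ∈ h.killingPotentials G φ ∧ ∀ p ∈ h.killingPotentials G φ,
    ∫ x, u x * p x ∂(h.volume φ) = ∫ x, f x * p x ∂(h.volume φ)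

open Classical in
/-- The orthogonal projection `Π^G_φ u` of `u` to `P^G_φ`. -/
def killingProjection (G : Subgroup (X ≃ₜ X)) (φ u : X → ℝ) : X → ℝ :=
  if H : ∃ f, h.IsKillingProjection G φ u f then H.choose else 0

/-- The reduced scalar curvature `S^G(φ) = S(φ) - S̄ - Π^G_φ S(φ)`. -/
def reducedScalar (G : Subgroup (X ≃ₜ X)) (φ : X → ℝ) (x : X) : ℝ :=
  h.scalarCurvature φ x - h.meanScalar φ - h.killingProjection G φ (h.scalarCurvature φ) x

/-- `V` is the extremal vector field `V^G` relative to `G`: it satisfies `V = ∇_{g_φ}(Π^G_φ S(φ))`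
for any `φ ∈ ℋ^G`. The first conjunct says that `Π^G_φ S(φ)` is not a default value. -/
def IsExtremalField (G : Subgroup (X ≃ₜ X)) (V : VField n X) : Prop :=
  ∀ φ ∈ h.invPotentials G,
    h.IsKillingProjection G φ (h.scalarCurvature φ)
      (h.killingProjection G φ (h.scalarCurvature φ)) ∧
    h.IsGradient φ (h.killingProjection G φ (h.scalarCurvature φ)) V

/-- `E` is a modified K-energy relative to `G`, i.e. a primitive on `ℋ^G` of the one-form
`φ ↦ -S^G(φ) dμ_φ`. Only the values of `E` on `ℋ^G` matter. -/
def IsModifiedKEnergy (G : Subgroup (X ≃ₜ X)) (E : (X → ℝ) → ℝ) : Prop :=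
  ∀ φ ∈ h.invPotentials G, ∀ ψ : X → ℝ, Smooth n ψ → IsInvariant G ψ →
    HasDerivWithinAt (fun t : ℝ => E (φ + t • ψ))
      (-∫ x, ψ x * h.reducedScalar G φ x ∂(h.volume φ))
      {t : ℝ | φ + t • ψ ∈ h.invPotentials G} 0

end HermitianMetric

end Bundle

end KahlerPol

end

/-!
Let `φ` be a `Gᵐ`-invariant Kähler potential. The projection of the scalar curvature `S(φ)` to the
Killing potentials of `Lie(Gᵐ)` is a potential of the extremal field `V`; since `JV` lies in
`Lie(G)`, it already belongs to the smaller space of Killing potentials of `Lie(G)`, so it is also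
the projection of `S(φ)` to that space. Hence the reduced scalar curvatures relative to `Gᵐ` and to
`G` agree on `ℋ^{Gᵐ}`, and the restriction of a modified K-energy relative to `G` is one relative to
`Gᵐ`. Two modified K-energies relative to the same group differ by a constant because `ℋ^{Gᵐ}` is
convex.
-/

namespace KahlerPol

theorem eq_of_hasDerivWithinAt_zero_of_convex {E : Type*} [AddCommGroup E] [Module ℝ E]
    {C : Set E} (hC : Convex ℝ C) {D : E → ℝ}
    (hD : ∀ x ∈ C, ∀ y ∈ C, ∀ z ∈ C,
      HasDerivWithinAt (fun t : ℝ => D (z + t • (y - x))) 0 {t | z + t • (y - x) ∈ C} 0)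
    {x y : E} (hx : x ∈ C) (hy : y ∈ C) : D y = D x := by
  have mem_C : ∀ t ∈ Set.Icc (0 : ℝ) 1, x + t • (y - x) ∈ C := fun t ht =>
    hC.add_smul_sub_mem hx hy ht
  have rebase (t s : ℝ) : x + t • (y - x) + (s - t) • (y - x) = x + s • (y - x) := by
    rw [add_assoc, ← add_smul, add_sub_cancel]
  have hderiv : ∀ t ∈ Set.Icc (0 : ℝ) 1,
      HasDerivWithinAt (fun s : ℝ => D (x + s • (y - x))) 0 (Set.Icc 0 1) t := by
    intro t ht
    have hshift : HasDerivWithinAt (fun s : ℝ => s - t) 1 (Set.Icc 0 1) t :=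
      (hasDerivWithinAt_id t _).sub_const t
    have hcomp := HasDerivWithinAt.scomp_of_eq t (hD x hx y hy _ (mem_C t ht)) hshift
      (fun s hs => by simpa only [Set.mem_ofPred_eq, rebase] using mem_C s hs) (sub_self t).symm
    simpa only [Function.comp_def, rebase, smul_zero] using hcomp
  have hconst := constant_of_derivWithin_zero
    (fun t ht => (hderiv t ht).differentiableWithinAt)
    (fun t ht => (hderiv t (Set.Ico_subset_Icc_self ht)).derivWithin
      (uniqueDiffOn_Icc zero_lt_one t (Set.Ico_subset_Icc_self ht)))
    1 (Set.right_mem_Icc.2 zero_le_one)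
  simpa only [one_smul, zero_smul, add_zero, add_sub_cancel] using hconst

theorem ae_eq_of_integral_mul_eq {α : Type*} [MeasurableSpace α] {μ : Measure α} {f g : α → ℝ}
    (hf : MemLp f 2 μ) (hg : MemLp g 2 μ)
    (hff : ∫ x, f x * f x ∂μ = ∫ x, g x * f x ∂μ)
    (hfg : ∫ x, f x * g x ∂μ = ∫ x, g x * g x ∂μ) : f =ᵐ[μ] g := by
  have integrable_mul {u v : α → ℝ} (hu : MemLp u 2 μ) (hv : MemLp v 2 μ) :
      Integrable (fun x => u x * v x) μ := hu.integrable_mul hv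
  have integrable_sub_mul {v : α → ℝ} (hv : MemLp v 2 μ) :
      Integrable (fun x => f x * v x - g x * v x) μ :=
    (integrable_mul hf hv).sub (integrable_mul hg hv)
  have hsq : ∫ x, (f x - g x) ^ 2 ∂μ = 0 :=
    calc ∫ x, (f x - g x) ^ 2 ∂μ
        = ∫ x, ((f x * f x - g x * f x) - (f x * g x - g x * g x)) ∂μ := by
          congr with x
          ring
      _ = 0 := by
          rw [integral_sub (integrable_sub_mul hf) (integrable_sub_mul hg),
            integral_sub (integrable_mul hf hf) (integrable_mul hg hf),
            integral_sub (integrable_mul hf hg) (integrable_mul hg hg), hff, hfg,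
            sub_self, sub_self, sub_zero]
  have integrable_sq : Integrable (fun x => (f x - g x) ^ 2) μ := (hf.sub hg).integrable_sq
  rw [integral_eq_zero_iff_of_nonneg (fun x => sq_nonneg _) integrable_sq] at hsq
  filter_upwards [hsq] with x hx
  exact sub_eq_zero.1 (pow_eq_zero_iff two_ne_zero |>.1 hx)

theorem isFiniteMeasure_sum_of_finite_support {ι α : Type*} [MeasurableSpace α]
    {μ : ι → Measure α} [∀ i, IsFiniteMeasure (μ i)] (hμ : (Function.support μ).Finite) :
    IsFiniteMeasure (Measure.sum μ) := by
  refine ⟨?_⟩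
  rw [Measure.sum_apply _ MeasurableSet.univ, tsum_eq_sum (s := hμ.toFinset)]
  · exact ENNReal.sum_lt_top.2 fun i _ => measure_lt_top (μ i) _
  · intro i hi
    rw [Set.Finite.mem_toFinset, Function.notMem_support] at hi
    rw [hi, Measure.coe_zero, Pi.zero_apply]

theorem integrableOn_comp_symm_mul {M E : Type*} [TopologicalSpace M] [CompactSpace M]
    [TopologicalSpace E] [T2Space E] [MeasurableSpace E] [OpensMeasurableSpace E]
    {μ : Measure E} [IsFiniteMeasureOnCompacts μ] (e : OpenPartialHomeomorph M E) {ρ : M → ℝ}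
    (hρ : Continuous ρ) (hρe : tsupport ρ ⊆ e.source) {D : E → ℝ}
    (hD : ContinuousOn D (e '' tsupport ρ)) :
    IntegrableOn (fun z => ρ (e.symm z) * D z) e.target μ := by
  have hK : IsCompact (e '' tsupport ρ) :=
    (isClosed_tsupport ρ).isCompact.image_of_continuousOn (e.continuousOn.mono hρe)
  have hKt : e '' tsupport ρ ⊆ e.target := (Set.image_mono hρe).trans e.image_source_eq_target.le
  have hint : IntegrableOn (fun z => ρ (e.symm z) * D z) (e '' tsupport ρ) μ :=
    ContinuousOn.integrableOn_compact' hK hK.measurableSet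
      ((hρ.comp_continuousOn (e.symm.continuousOn.mono hKt)).mul hD)
  refine hint.of_forall_sdiff_eq_zero e.open_target.measurableSet ?_
  rintro z ⟨hz, hzK⟩
  have hzρ : e.symm z ∉ tsupport ρ := fun hs => hzK ⟨_, hs, e.right_inv hz⟩
  rw [image_eq_zero_of_notMem_tsupport hzρ, zero_mul]

section ComplexHessian

variable {n : ℕ} {F G : Cn n → ℝ} {z : Cn n}

theorem fderiv_ofReal_comp {E : Type*} [NormedAddCommGroup E] [NormedSpace ℝ E] {f : E → ℝ}
    {x : E} (hf : DifferentiableAt ℝ f x) (v : E) :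
    fderiv ℝ (fun y => (f y : ℂ)) x v = (fderiv ℝ f x v : ℂ) := by
  have h := (Complex.ofRealCLM.hasFDerivAt.comp x hf.hasFDerivAt).fderiv
  exact congrArg (fun A : E →L[ℝ] ℂ => A v) h

theorem fderiv_dzbar_ofReal_comp (hF : ContDiffAt ℝ 2 F z) (k : Fin n) (u : Cn n) :
    fderiv ℝ (dzbar k fun w => (F w : ℂ)) z u =
      (1 / 2) * ((iteratedFDeriv ℝ 2 F z ![u, Pi.single k 1] : ℂ) +
        Complex.I * (iteratedFDeriv ℝ 2 F z ![u, Pi.single k Complex.I] : ℂ)) := by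
  have hdzbar : dzbar k (fun w => (F w : ℂ)) =ᶠ[nhds z] fun w =>
      (1 / 2) * ((fderiv ℝ F w (Pi.single k 1) : ℂ) +
        Complex.I * (fderiv ℝ F w (Pi.single k Complex.I) : ℂ)) := by
    filter_upwards [hF.eventually (by simp)] with w hw
    simp only [dzbar, fderiv_ofReal_comp (hw.differentiableAt two_ne_zero)]
  have hdF : DifferentiableAt ℝ (fderiv ℝ F) z :=
    (hF.fderiv_right (m := 1) le_rfl).differentiableAt one_ne_zero
  have hdFv (v : Cn n) : DifferentiableAt ℝ (fun w => fderiv ℝ F w v) z :=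
    hdF.clm_apply (differentiableAt_const v)
  have hdFv' (v : Cn n) : DifferentiableAt ℝ (fun w => (fderiv ℝ F w v : ℂ)) z :=
    Complex.ofRealCLM.differentiableAt.comp z (hdFv v)
  have hD2 (v : Cn n) :
      fderiv ℝ (fun w => (fderiv ℝ F w v : ℂ)) z u = (iteratedFDeriv ℝ 2 F z ![u, v] : ℂ) := by
    rw [fderiv_ofReal_comp (hdFv v), fderiv_clm_apply hdF (differentiableAt_const v),
      iteratedFDeriv_two_apply]
    simp
  rw [hdzbar.fderiv_eq, fderiv_const_mul ((hdFv' _).fun_add ((hdFv' _).const_mul _)),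
    fderiv_fun_add (hdFv' _) ((hdFv' _).const_mul _), fderiv_const_mul (hdFv' _)]
  simp only [smul_apply, add_apply, hD2, smul_eq_mul]

theorem complexHessian_apply (hF : ContDiffAt ℝ 2 F z) (j k : Fin n) :
    complexHessian F z j k = (1 / 4) *
      ((iteratedFDeriv ℝ 2 F z ![Pi.single j 1, Pi.single k 1] +
          iteratedFDeriv ℝ 2 F z ![Pi.single j Complex.I, Pi.single k Complex.I]) +
        Complex.I * (iteratedFDeriv ℝ 2 F z ![Pi.single j 1, Pi.single k Complex.I] -
          iteratedFDeriv ℝ 2 F z ![Pi.single j Complex.I, Pi.single k 1])) := by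
  rw [complexHessian, Matrix.of_apply, dz, fderiv_dzbar_ofReal_comp hF, fderiv_dzbar_ofReal_comp hF]
  linear_combination (-1 / 4 : ℂ) *
    (iteratedFDeriv ℝ 2 F z ![Pi.single j Complex.I, Pi.single k Complex.I] : ℂ) * Complex.I_mul_I

theorem complexHessian_add (hF : ContDiffAt ℝ 2 F z) (hG : ContDiffAt ℝ 2 G z) :
    complexHessian (F + G) z = complexHessian F z + complexHessian G z := by
  ext j k
  rw [Matrix.add_apply, complexHessian_apply (F := F + G) (hF.add hG), complexHessian_apply hF,
    complexHessian_apply hG, iteratedFDeriv_add_apply hF hG]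
  simp only [add_apply, Complex.ofReal_add]
  ring

theorem complexHessian_const_smul (a : ℝ) (hF : ContDiffAt ℝ 2 F z) :
    complexHessian (a • F) z = (a : ℂ) • complexHessian F z := by
  ext j k
  rw [Matrix.smul_apply, complexHessian_apply (F := a • F) (hF.const_smul a),
    complexHessian_apply hF, iteratedFDeriv_const_smul_apply hF]
  simp only [smul_apply, smul_eq_mul, Complex.ofReal_mul]
  ring

theorem continuousAt_complexHessian (hF : ContDiffAt ℝ 2 F z) :
    ContinuousAt (complexHessian F) z := by
  refine continuousAt_pi.2 fun j => continuousAt_pi.2 fun k => ?_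
  have hformula := (hF.eventually (by simp)).mono fun w hw => complexHessian_apply hw j k
  have hD2 (m : Fin 2 → Cn n) :
      ContinuousAt (fun w => (iteratedFDeriv ℝ 2 F w m : ℂ)) z :=
    Complex.continuous_ofReal.continuousAt.comp
      ((ContinuousMultilinearMap.apply ℝ _ ℝ m).continuous.continuousAt.comp
        (hF.continuousAt_iteratedFDeriv le_rfl))
  refine ContinuousAt.congr ?_ (hformula.mono fun _ => Eq.symm)
  exact continuousAt_const.mul (((hD2 _).add (hD2 _)).add
    (continuousAt_const.mul ((hD2 _).sub (hD2 _))))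

end ComplexHessian

section Manifold

theorem isManifold_restrictScalars (𝕜 : Type*) [NontriviallyNormedField 𝕜] {𝕜' : Type*}
    [NontriviallyNormedField 𝕜'] [NormedAlgebra 𝕜 𝕜'] {E M : Type*} [NormedAddCommGroup E]
    [NormedSpace 𝕜 E] [NormedSpace 𝕜' E] [IsScalarTower 𝕜 𝕜' E] [TopologicalSpace M]
    [ChartedSpace E M] {k : ℕ∞ω} [IsManifold 𝓘(𝕜', E) k M] : IsManifold 𝓘(𝕜, E) k M := by
  refine isManifold_of_contDiffOn _ _ _ fun e e' he he' => ?_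
  have h := (contDiffGroupoid k 𝓘(𝕜', E)).compatible he he'
  rw [contDiffGroupoid, mem_groupoid_of_pregroupoid] at h
  simpa only [contDiffPregroupoid, modelWithCornersSelf_coe, modelWithCornersSelf_coe_symm,
    Function.comp_id, Function.id_comp, Set.range_id, Set.inter_univ, Set.preimage_id]
    using h.1.restrict_scalars 𝕜

theorem contDiffAt_comp_chartAt_symm {𝕜 E F M : Type*} [NontriviallyNormedField 𝕜]
    [NormedAddCommGroup E] [NormedSpace 𝕜 E] [NormedAddCommGroup F] [NormedSpace 𝕜 F]
    [TopologicalSpace M] [ChartedSpace E M] {k : ℕ∞ω} [IsManifold 𝓘(𝕜, E) k M] {f : M → F} {x : M}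
    {z : E} (hz : z ∈ (chartAt E x).target)
    (hf : ContMDiffAt 𝓘(𝕜, E) 𝓘(𝕜, F) k f ((chartAt E x).symm z)) :
    ContDiffAt 𝕜 k (f ∘ (chartAt E x).symm) z :=
  (hf.comp z ((contMDiffOn_chart_symm (I := 𝓘(𝕜, E))).contMDiffAt
    ((chartAt E x).open_target.mem_nhds hz))).contDiffAt

theorem trivialization_symm_ne_zero (R : Type*) {B F : Type*} {E : B → Type*}
    [Semiring R] [TopologicalSpace B] [TopologicalSpace F] [AddCommMonoid F] [Module R F]
    [TopologicalSpace (TotalSpace F E)] [∀ b, AddCommMonoid (E b)] [∀ b, Module R (E b)]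
    (e : Trivialization F (π F E)) [e.IsLinear R] {b : B} (hb : b ∈ e.baseSet) {v : F}
    (hv : v ≠ 0) : e.symm b v ≠ 0 := by
  change (e.linearEquivAt R b hb).symm v ≠ 0
  exact (LinearEquiv.map_ne_zero_iff _).2 hv

variable {n : ℕ} {X : Type*} [TopologicalSpace X] [ChartedSpace (Cn n) X]

theorem Smooth.const_smul (c : ℝ) {f : X → ℝ} (hf : Smooth n f) : Smooth n (c • f) :=
  (contDiff_const_smul c).contMDiff.comp hf

theorem lieAlg_mono {G K : Subgroup (X ≃ₜ X)} (hGK : G ≤ K) :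
    lieAlg (n := n) G ⊆ lieAlg K :=
  fun _ ⟨γ, hγ, hrest⟩ => ⟨γ, fun t => hGK (hγ t), hrest⟩

end Manifold

namespace HermitianMetric

variable {n : ℕ} {X : Type*} [TopologicalSpace X] [ChartedSpace (Cn n) X]
  {L : X → Type*} [TopologicalSpace (TotalSpace ℂ L)] [∀ x, TopologicalSpace (L x)]
  [∀ x, AddCommGroup (L x)] [∀ x, Module ℂ (L x)] [FiberBundle ℂ L] [VectorBundle ℂ ℂ L]
  (h : HermitianMetric n L) {φ ψ : X → ℝ} {G K : Subgroup (X ≃ₜ X)}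

theorem invPotentials_anti (hGK : G ≤ K) : h.invPotentials K ⊆ h.invPotentials G :=
  fun _ hφ => ⟨hφ.1, fun σ hσ => hφ.2 σ (hGK hσ)⟩

theorem mem_chartDomain_self (x : X) : x ∈ h.chartDomain x :=
  ⟨mem_chart_source (Cn n) x, FiberBundle.mem_baseSet_trivializationAt' x⟩

theorem contMDiffOn_weight (x : X) :
    ContMDiffOn 𝓘(ℝ, Cn n) 𝓘(ℝ, ℝ) ∞ (h.weight x) (trivializationAt ℂ L x).baseSet := by
  intro y hy
  have hpos := h.normSq_pos y _
    (trivialization_symm_ne_zero ℂ (trivializationAt ℂ L x) hy (one_ne_zero (α := ℂ)))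
  exact ContMDiffAt.comp_contMDiffWithinAt (g := fun r : ℝ => -Real.log r) y
    (Real.contDiffAt_log.2 hpos.ne').neg.contMDiffAt (h.smooth x y hy)

theorem localMetric_sub_left (φ : X → ℝ) (x : X) (z u v w : Cn n) :
    h.localMetric φ x z (u - v) w = h.localMetric φ x z u w - h.localMetric φ x z v w := by
  simp only [localMetric, Pi.sub_apply, mul_sub, sub_mul, Finset.sum_sub_distrib, Complex.sub_re]

theorem localMetric_self_pos {x : X} {z v : Cn n} (hpd : (h.metricMatrix φ x z).PosDef)
    (hv : v ≠ 0) : 0 < h.localMetric φ x z v v := by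
  -- In `PosDef` the conjugate falls on the first vector, in `localMetric` on the second.
  have hquad : h.localMetric φ x z v v =
      2 * (star (star v) ⬝ᵥ (h.metricMatrix φ x z).mulVec (star v)).re := by
    simp only [localMetric, dotProduct, Matrix.mulVec, Finset.mul_sum, star_star, Pi.star_apply,
      starRingEnd_apply]
    refine congrArg (fun c : ℂ => 2 * c.re) (Finset.sum_congr rfl fun j _ =>
      Finset.sum_congr rfl fun k _ => ?_)
    ring
  rw [hquad]
  exact mul_pos two_pos (hpd.re_dotProduct_pos (star_ne_zero.2 hv))

theorem gradient_unique {f : X → ℝ} (hφ : φ ∈ h.potentials) {V W : VField n X}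
    (hV : h.IsGradient φ f V) (hW : h.IsGradient φ f W) : V = W := by
  funext x
  by_contra hne
  refine (h.localMetric_self_pos (hφ.2 x) (sub_ne_zero.2 hne)).ne' ?_
  exact (h.localMetric_sub_left φ x _ (V x) (W x) _).trans
    (sub_eq_zero.2 ((hV x _).trans (hW x _).symm))

section Potentials

variable [IsManifold 𝓘(ℝ, Cn n) ∞ X]

theorem contDiffAt_localPotential (hφ : Smooth n φ) {x : X} {z : Cn n}
    (hz : z ∈ (chartAt (Cn n) x).target) (hzx : (chartAt (Cn n) x).symm z ∈ h.chartDomain x) :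
    ContDiffAt ℝ 2 (fun w => h.weight x ((chartAt (Cn n) x).symm w) +
      φ ((chartAt (Cn n) x).symm w)) z := by
  have hweight := (h.contMDiffOn_weight x).contMDiffAt
    ((trivializationAt ℂ L x).open_baseSet.mem_nhds hzx.2)
  exact ((contDiffAt_comp_chartAt_symm hz hweight).add
    (contDiffAt_comp_chartAt_symm hz (hφ _))).of_le (by norm_cast)

theorem continuousAt_metricMatrix (hφ : Smooth n φ) {x : X} {z : Cn n}
    (hz : z ∈ (chartAt (Cn n) x).target) (hzx : (chartAt (Cn n) x).symm z ∈ h.chartDomain x) :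
    ContinuousAt (h.metricMatrix φ x) z :=
  continuousAt_complexHessian (h.contDiffAt_localPotential hφ hz hzx)

theorem metricMatrix_smul_add_smul (hφ : Smooth n φ) (hψ : Smooth n ψ) {a b : ℝ}
    (hab : a + b = 1) {x : X} {z : Cn n} (hz : z ∈ (chartAt (Cn n) x).target)
    (hzx : (chartAt (Cn n) x).symm z ∈ h.chartDomain x) :
    h.metricMatrix (a • φ + b • ψ) x z =
      (a : ℂ) • h.metricMatrix φ x z + (b : ℂ) • h.metricMatrix ψ x z := by
  have hφz := h.contDiffAt_localPotential hφ hz hzx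
  have hψz := h.contDiffAt_localPotential hψ hz hzx
  rw [metricMatrix, metricMatrix, metricMatrix, ← complexHessian_const_smul a hφz,
    ← complexHessian_const_smul b hψz,
    ← complexHessian_add (F := a • _) (G := b • _) (hφz.const_smul a) (hψz.const_smul b)]
  congr 1
  funext w
  simp only [Pi.add_apply, Pi.smul_apply, smul_eq_mul]
  linear_combination (-h.weight x ((chartAt (Cn n) x).symm w)) * hab

theorem convex_potentials : Convex ℝ h.potentials := by
  rw [convex_iff_forall_pos]
  intro φ hφ ψ hψ a b ha hb hab
  refine ⟨ContMDiff.add (hφ.1.const_smul a) (hψ.1.const_smul b), fun x => ?_⟩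
  have hx : (chartAt (Cn n) x).symm (chartAt (Cn n) x x) ∈ h.chartDomain x := by
    rw [(chartAt (Cn n) x).left_inv (mem_chart_source _ x)]
    exact h.mem_chartDomain_self x
  rw [h.metricMatrix_smul_add_smul hφ.1 hψ.1 hab (mem_chart_target _ x) hx]
  exact ((hφ.2 x).smul (Complex.zero_lt_real.2 ha)).add
    ((hψ.2 x).smul (Complex.zero_lt_real.2 hb))

theorem convex_invPotentials (G : Subgroup (X ≃ₜ X)) : Convex ℝ (h.invPotentials G) := by
  intro φ hφ ψ hψ a b ha hb hab
  refine ⟨h.convex_potentials hφ.1 hψ.1 ha hb hab, fun σ hσ x => ?_⟩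
  simp only [Pi.add_apply, Pi.smul_apply, hφ.2 σ hσ x, hψ.2 σ hσ x]

end Potentials

variable [CompactSpace X] [T2Space X]

/-- The measure on the model space that contributes to `h.volume φ` through the preferred chart at
`x`: the density of `dμ_φ` in that chart, cut off by the partition of unity. -/
noncomputable def localVolume (φ : X → ℝ) (x : X) : Measure (Cn n) :=
  (MeasureTheory.volume.restrict (chartAt (Cn n) x).target).withDensity fun z =>
    ENNReal.ofReal (h.partition x ((chartAt (Cn n) x).symm z) *
      (2 ^ n * (h.metricMatrix φ x z).det.re))

theorem tsupport_partition_subset (x : X) : tsupport (h.partition x) ⊆ h.chartDomain x :=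
  h.exists_partition.choose_spec x

theorem localVolume_eq_zero (φ : X → ℝ) {x : X} (hx : ⇑(h.partition x) = 0) :
    h.localVolume φ x = 0 := by
  simp only [localVolume, hx, Pi.zero_apply, zero_mul, ENNReal.ofReal_zero]
  exact withDensity_zero

theorem isFiniteMeasure_localVolume [IsManifold 𝓘(ℝ, Cn n) ∞ X] (hφ : Smooth n φ) (x : X) :
    IsFiniteMeasure (h.localVolume φ x) := by
  have hsub := h.tsupport_partition_subset x
  refine isFiniteMeasure_withDensity_ofReal (Integrable.hasFiniteIntegral ?_)
  refine integrableOn_comp_symm_mul _ (h.partition x).continuous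
    (hsub.trans Set.inter_subset_left) ?_
  rintro _ ⟨y, hy, rfl⟩
  have hysource := (hsub hy).1
  have hcont : ContinuousAt (h.metricMatrix φ x) (chartAt (Cn n) x y) := by
    refine h.continuousAt_metricMatrix hφ ((chartAt (Cn n) x).map_source hysource) ?_
    rw [(chartAt (Cn n) x).left_inv hysource]
    exact hsub hy
  exact (continuousAt_const.mul (Complex.continuous_re.continuousAt.comp
    (continuous_id.matrix_det.continuousAt.comp hcont))).continuousWithinAt

theorem isFiniteMeasure_volume [MeasurableSpace X] [IsManifold 𝓘(ℝ, Cn n) ∞ X]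
    (hφ : Smooth n φ) : IsFiniteMeasure (h.volume φ) := by
  have hfin := h.isFiniteMeasure_localVolume hφ
  refine isFiniteMeasure_sum_of_finite_support
    (μ := fun x => (h.localVolume φ x).map (chartAt (Cn n) x).symm)
    (h.partition.locallyFinite.finite_nonempty_of_compact.subset fun x hx => ?_)
  rw [Set.mem_ofPred_eq, Function.support_nonempty_iff]
  intro hzero
  exact hx (by simp only [h.localVolume_eq_zero φ hzero, Measure.map_zero])

section KillingProjection

variable [MeasurableSpace X] {u f g : X → ℝ}

theorem killingPotentials_mono (hGK : G ≤ K) (φ : X → ℝ) :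
    h.killingPotentials G φ ⊆ h.killingPotentials K φ :=
  fun _ ⟨hf, h0, V, hV, hK, hl⟩ => ⟨hf, h0, V, hV, hK, lieAlg_mono hGK hl⟩

variable {h}

theorem IsKillingProjection.of_le (hf : h.IsKillingProjection K φ u f) (hGK : G ≤ K)
    (hφ : φ ∈ h.potentials) {V : VField n X} (hV : h.IsGradient φ f V)
    (hJV : (fun x => J (V x)) ∈ lieAlg G) : h.IsKillingProjection G φ u f := by
  obtain ⟨⟨hsmooth, hmean, W, hW, hKilling, -⟩, horth⟩ := hf
  obtain rfl := h.gradient_unique hφ hW hV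
  exact ⟨⟨hsmooth, hmean, W, hW, hKilling, hJV⟩,
    fun p hp => horth p (h.killingPotentials_mono hGK φ hp)⟩

theorem IsKillingProjection.killingProjection (hf : h.IsKillingProjection G φ u f) :
    h.IsKillingProjection G φ u (h.killingProjection G φ u) := by
  have hex : ∃ f, h.IsKillingProjection G φ u f := ⟨f, hf⟩
  rw [HermitianMetric.killingProjection, dif_pos hex]
  exact hex.choose_spec

variable [IsManifold 𝓘(ℝ, Cn n) ∞ X] [OpensMeasurableSpace X]

theorem IsKillingProjection.ae_eq (hf : h.IsKillingProjection G φ u f)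
    (hg : h.IsKillingProjection G φ u g) (hφ : Smooth n φ) : f =ᵐ[h.volume φ] g := by
  have := h.isFiniteMeasure_volume hφ
  have memLp {p : X → ℝ} (hp : p ∈ h.killingPotentials G φ) : MemLp p 2 (h.volume φ) :=
    (ContMDiff.continuous hp.1).memLp_of_hasCompactSupport (HasCompactSupport.of_compactSpace p)
  exact ae_eq_of_integral_mul_eq (memLp hf.1) (memLp hg.1)
    ((hf.2 f hf.1).symm.trans (hg.2 f hf.1)) ((hf.2 g hg.1).symm.trans (hg.2 g hg.1))

theorem IsExtremalField.reducedScalar_ae_eq {V : VField n X} (hV : h.IsExtremalField K V)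
    (hGK : G ≤ K) (hJV : (fun x => J (V x)) ∈ lieAlg G) (hφ : φ ∈ h.invPotentials K) :
    h.reducedScalar K φ =ᵐ[h.volume φ] h.reducedScalar G φ := by
  obtain ⟨hprojK, hgrad⟩ := hV φ hφ
  have hprojG := hprojK.of_le hGK hφ.1 hgrad hJV
  filter_upwards [hprojG.ae_eq hprojG.killingProjection hφ.1.1] with x hx
  simp only [reducedScalar, hx]

end KillingProjection

section ModifiedKEnergy

variable [MeasurableSpace X] [IsManifold 𝓘(ℝ, Cn n) ∞ X] {h} {E E₁ E₂ : (X → ℝ) → ℝ}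

theorem IsModifiedKEnergy.of_le [OpensMeasurableSpace X] (hE : h.IsModifiedKEnergy G E)
    (hGK : G ≤ K) {V : VField n X} (hV : h.IsExtremalField K V)
    (hJV : (fun x => J (V x)) ∈ lieAlg G) : h.IsModifiedKEnergy K E := by
  intro φ hφ ψ hψ hψK
  have hintegral : ∫ x, ψ x * h.reducedScalar K φ x ∂(h.volume φ) =
      ∫ x, ψ x * h.reducedScalar G φ x ∂(h.volume φ) := by
    refine integral_congr_ae ?_
    filter_upwards [hV.reducedScalar_ae_eq hGK hJV hφ] with x hx
    rw [hx]
  rw [hintegral]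
  exact (hE φ (h.invPotentials_anti hGK hφ) ψ hψ fun σ hσ => hψK σ (hGK hσ)).mono
    fun _ ht => h.invPotentials_anti hGK ht

theorem IsModifiedKEnergy.sub_eq_sub (hE₁ : h.IsModifiedKEnergy G E₁)
    (hE₂ : h.IsModifiedKEnergy G E₂) (hφ : φ ∈ h.invPotentials G) (hψ : ψ ∈ h.invPotentials G) :
    E₁ ψ - E₂ ψ = E₁ φ - E₂ φ := by
  refine eq_of_hasDerivWithinAt_zero_of_convex (D := fun χ => E₁ χ - E₂ χ)
    (h.convex_invPotentials G) (fun ξ hξ η hη χ hχ => ?_) hφ hψ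
  have hsmooth : Smooth n (η - ξ) := ContMDiff.sub hη.1.1 hξ.1.1
  have hinv : IsInvariant G (η - ξ) := fun σ hσ x => by
    simp only [Pi.sub_apply, hη.2 σ hσ x, hξ.2 σ hσ x]
  simpa only [sub_self] using!
    (hE₁ χ hχ _ hsmooth hinv).sub (hE₂ χ hχ _ hsmooth hinv)

end ModifiedKEnergy

end HermitianMetric

end KahlerPol

theorem modified_K_energies_agree_on_invariant_potentials_general
    {n : ℕ} {X : Type*} [TopologicalSpace X] [ChartedSpace (KahlerPol.Cn n) X]
    [IsManifold 𝓘(ℝ, KahlerPol.Cn n) ∞ X] [CompactSpace X] [T2Space X]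
    [MeasurableSpace X] [OpensMeasurableSpace X]
    {L : X → Type*} [TopologicalSpace (TotalSpace ℂ L)] [∀ x, TopologicalSpace (L x)]
    [∀ x, AddCommGroup (L x)] [∀ x, Module ℂ (L x)] [FiberBundle ℂ L] [VectorBundle ℂ ℂ L]
    {h : KahlerPol.HermitianMetric n L} {K G : Subgroup (X ≃ₜ X)} (hGK : G ≤ K)
    {V : KahlerPol.VField n X} (hV : h.IsExtremalField K V)
    (hJV : (fun x => KahlerPol.J (V x)) ∈ KahlerPol.lieAlg G)
    {EK EG : (X → ℝ) → ℝ}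
    (hEK : h.IsModifiedKEnergy K EK) (hEG : h.IsModifiedKEnergy G EG) :
    (∃ c : ℝ, ∀ φ ∈ h.invPotentials K, EK φ = EG φ + c) ∧
      ∀ φ₀ ∈ h.invPotentials K, IsMinOn EG (h.invPotentials G) φ₀ →
        IsMinOn EK (h.invPotentials K) φ₀ := by
  have hsub : ∀ φ ∈ h.invPotentials K, ∀ ψ ∈ h.invPotentials K,
      EK ψ - EG ψ = EK φ - EG φ := fun φ hφ ψ hψ =>
    hEK.sub_eq_sub (hEG.of_le hGK hV hJV) hφ hψ
  refine ⟨?_, fun φ₀ hφ₀ hmin φ hφ => ?_⟩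
  · rcases (h.invPotentials K).eq_empty_or_nonempty with hempty | ⟨φ, hφ⟩
    · exact ⟨0, by simp only [hempty, Set.mem_empty_iff_false, false_imp_iff, implies_true]⟩
    · exact ⟨EK φ - EG φ, fun ψ hψ => by linarith [hsub φ hφ ψ hψ]⟩
  · have hle : EG φ₀ ≤ EG φ := hmin (h.invPotentials_anti hGK hφ)
    change EK φ₀ ≤ EK φ
    linarith [hsub φ₀ hφ₀ φ hφ]

theorem modified_K_energies_agree_on_invariant_potentials
    {n : ℕ} {X : Type*} [TopologicalSpace X] [ChartedSpace (KahlerPol.Cn n) X]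
    [IsManifold 𝓘(ℂ, KahlerPol.Cn n) ω X] [CompactSpace X] [T2Space X] [ConnectedSpace X]
    [MeasurableSpace X] [BorelSpace X]
    (L : X → Type*) [TopologicalSpace (TotalSpace ℂ L)] [∀ x, TopologicalSpace (L x)]
    [∀ x, AddCommGroup (L x)] [∀ x, Module ℂ (L x)] [FiberBundle ℂ L] [VectorBundle ℂ ℂ L]
    [ContMDiffVectorBundle ω ℂ L 𝓘(ℂ, KahlerPol.Cn n)]
    -- the Kähler form `ω ∈ c₁(L)`: the curvature form of a positively curved metric `h` on `L`
    (h : KahlerPol.HermitianMetric n L) (hpos : 0 ∈ h.potentials)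
    (Gm G : Subgroup (X ≃ₜ X))
    (hGm : KahlerPol.IsMaximalCompactConnected n L Gm)
    (hG : KahlerPol.IsCompactConnected G) (hGGm : G ≤ Gm)
    (hinv : h.FormInvariant Gm)
    (V : KahlerPol.VField n X) (hV : h.IsExtremalField Gm V)
    (hJV : (fun x => KahlerPol.J (V x)) ∈ KahlerPol.lieAlg G)
    (EGm EG : (X → ℝ) → ℝ)
    (hEGm : h.IsModifiedKEnergy Gm EGm) (hEG : h.IsModifiedKEnergy G EG) :
    (∃ c : ℝ, ∀ φ ∈ h.invPotentials Gm, EGm φ = EG φ + c) ∧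
      ∀ φ₀ ∈ h.invPotentials Gm, IsMinOn EG (h.invPotentials G) φ₀ →
        IsMinOn EGm (h.invPotentials Gm) φ₀ := by
  have : IsManifold 𝓘(ℝ, KahlerPol.Cn n) ω X := KahlerPol.isManifold_restrictScalars ℝ (𝕜' := ℂ)
  exact modified_K_energies_agree_on_invariant_potentials_general hGGm hV hJV hEGm hEG
end
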